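/- arXiv:2110.08237 — 12 statements merged into one kernel-verified Lean document; each statement's English description precedes it below -/
import Mathlib

section
/- Let R be a commutative ring and let A and B be quasi-modules over R. Then the tensor product A ⊗_R B (formed using the right R-module structure of A and the left R-module structure of B, and regarded as an R-R-bimodule via the left R-action on A and the right R-action on B) is again a quasi-module over R. -/
/-!
STATEMENT 0. Quasi-modules over a commutative ring `R`: an `R`-`R`-bimodule is an abelian
group `A` equipped with two commuting `R`-module structures (since `R` is commutative, a right
`R`-module structure is just another `R`-module structure).  The filtration
`F₀A ⊆ F₁A ⊆ ⋯` is defined by `F₋₁A = 0` and `a ∈ FₙA` iff `r•a − a•r ∈ Fₙ₋₁A` for all `r`,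
and `A` is a quasi-module iff `A = ⋃ₙ FₙA`.  The theorem: if `A` and `B` are quasi-modules,
then `A ⊗[R] B` (formed using the right structure of `A` and the left structure of `B`, and
equipped with left action through `A` and right action through `B`) is a quasi-module.
-/

/-- The scalar multiplication given by an explicitly specified module structure. -/
def ModSMul {R A : Type*} [Semiring R] [AddCommMonoid A] (m : Module R A) (r : R) (a : A) : A :=
  letI := m
  r • a

/-- The quasi-module filtration `F₀A ⊆ F₁A ⊆ ⋯` attached to a pair of `R`-module structures on
`A` (`l` giving the left action `r • a`, and `r` the right action `a • r`):  an element `a`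
belongs to `quasiFil l r 0` iff `s•a - a•s = 0` for all `s : R` (i.e. lies in `F₋₁A = 0`), and
`a ∈ quasiFil l r (n+1)` iff `s•a - a•s ∈ quasiFil l r n` for all `s : R`. -/
def quasiFil {R A : Type*} [CommRing R] [AddCommGroup A] (l r : Module R A) : ℕ → Set A
  | 0 => {a | ∀ s : R, ModSMul l s a - ModSMul r s a = 0}
  | n + 1 => {a | ∀ s : R, ModSMul l s a - ModSMul r s a ∈ quasiFil l r n}

/-- An `R`-`R`-bimodule, given by the pair of module structures `(l, r)`, is a *quasi-module*
if its quasi-module filtration is exhaustive: `A = ⋃ₙ FₙA`. -/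
def IsQuasiModule {R A : Type*} [CommRing R] [AddCommGroup A] (l r : Module R A) : Prop :=
  ∀ a : A, ∃ n : ℕ, a ∈ quasiFil l r n

/-!
The commutators `δ s a = s • a - a • s` satisfy a Leibniz rule on the tensor product,
`δ s (a ⊗ b) = δ s a ⊗ b + a ⊗ δ s b`: the terms `(a • s) ⊗ b` and `a ⊗ (s • b)` agree because
the tensor product is balanced. Hence `Fₘ A ⊗ Fₙ B` lands in `Fₘ₊ₙ (A ⊗ B)`, and pure tensors
generate `A ⊗ B` additively.
-/

section KerFiltration

variable {ι A B T : Type*}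

/-- The iterated common kernels of a family `d` of additive endomorphisms: an element lies in step
`n` if every composite of `n` members of the family kills it. Step `0` is `⊥`, so that
for the family of commutators of a bimodule step `n + 1` is `Fₙ`. -/
def kerFiltration [AddMonoid A] (d : ι → A →+ A) : ℕ → AddSubmonoid A
  | 0 => ⊥
  | n + 1 => ⨅ i, (kerFiltration d n).comap (d i)

theorem mem_kerFiltration_zero [AddMonoid A] {d : ι → A →+ A} {a : A} :
    a ∈ kerFiltration d 0 ↔ a = 0 :=
  AddSubmonoid.mem_bot

theorem mem_kerFiltration_succ [AddMonoid A] {d : ι → A →+ A} {n : ℕ} {a : A} :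
    a ∈ kerFiltration d (n + 1) ↔ ∀ i, d i a ∈ kerFiltration d n := by
  simp only [kerFiltration, AddSubmonoid.mem_iInf, AddSubmonoid.mem_comap]

theorem kerFiltration_mono [AddMonoid A] (d : ι → A →+ A) : Monotone (kerFiltration d) := by
  refine monotone_nat_of_le_succ fun n => ?_
  induction n with
  | zero => exact bot_le
  | succ n ih =>
    intro a ha
    rw [mem_kerFiltration_succ] at ha ⊢
    exact fun i => ih (ha i)

theorem mem_iSup_kerFiltration [AddMonoid A] {d : ι → A →+ A} {a : A} :
    a ∈ ⨆ n, kerFiltration d n ↔ ∃ n, a ∈ kerFiltration d n :=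
  AddSubmonoid.mem_iSup_of_directed (kerFiltration_mono d).directed_le

variable [AddMonoid A] [AddMonoid B] [AddCommMonoid T]
  {dA : ι → A →+ A} {dB : ι → B →+ B} {dT : ι → T →+ T} {f : A →+ B →+ T}

theorem map_mem_kerFiltration_of_leibniz
    (leibniz : ∀ i a b, dT i (f a b) = f (dA i a) b + f a (dB i b))
    {m n k : ℕ} (hmn : m + n ≤ k + 1) {a : A} {b : B}
    (ha : a ∈ kerFiltration dA m) (hb : b ∈ kerFiltration dB n) :
    f a b ∈ kerFiltration dT k := by
  induction k generalizing m n a b with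
  | zero =>
    obtain rfl | rfl : m = 0 ∨ n = 0 := by omega
    · simp [mem_kerFiltration_zero.mp ha]
    · simp [mem_kerFiltration_zero.mp hb]
  | succ k ih =>
    obtain _ | m := m
    · simp [mem_kerFiltration_zero.mp ha]
    obtain _ | n := n
    · simp [mem_kerFiltration_zero.mp hb]
    refine mem_kerFiltration_succ.mpr fun i => ?_
    rw [leibniz]
    exact add_mem
      (ih (by omega) (mem_kerFiltration_succ.mp ha i) hb)
      (ih (by omega) ha (mem_kerFiltration_succ.mp hb i))

theorem iSup_kerFiltration_eq_top_of_leibniz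
    (leibniz : ∀ i a b, dT i (f a b) = f (dA i a) b + f a (dB i b))
    (hf : AddSubmonoid.closure {t | ∃ a b, f a b = t} = ⊤)
    (hA : ⨆ n, kerFiltration dA n = ⊤) (hB : ⨆ n, kerFiltration dB n = ⊤) :
    ⨆ n, kerFiltration dT n = ⊤ := by
  rw [eq_top_iff, ← hf, AddSubmonoid.closure_le]
  rintro _ ⟨a, b, rfl⟩
  obtain ⟨m, ha⟩ := mem_iSup_kerFiltration.mp (hA ▸ AddSubmonoid.mem_top a)
  obtain ⟨n, hb⟩ := mem_iSup_kerFiltration.mp (hB ▸ AddSubmonoid.mem_top b)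
  exact mem_iSup_kerFiltration.mpr
    ⟨m + n, map_mem_kerFiltration_of_leibniz leibniz (Nat.le_succ _) ha hb⟩

end KerFiltration

section ScalarCommutator

variable {R A B T : Type*} [Semiring R] [AddCommGroup A] [AddCommGroup B] [AddCommGroup T]

/-- The commutator `a ↦ s • a - a • s` with a scalar `s`, where `l` is the left and `r` the right
module structure. -/
def scalarCommutator (l r : Module R A) (s : R) : A →+ A :=
  @smulAddHom R A _ _ l s - @smulAddHom R A _ _ r s

theorem scalarCommutator_apply (l r : Module R A) (s : R) (a : A) :
    scalarCommutator l r s a = ModSMul l s a - ModSMul r s a :=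
  rfl

theorem scalarCommutator_leibniz {lA rA : Module R A} {lB rB : Module R B} {lT rT : Module R T}
    {f : A →+ B →+ T}
    (balanced : ∀ s a b, f (ModSMul rA s a) b = f a (ModSMul lB s b))
    (hl : ∀ s a b, ModSMul lT s (f a b) = f (ModSMul lA s a) b)
    (hr : ∀ s a b, ModSMul rT s (f a b) = f a (ModSMul rB s b)) (s : R) (a : A) (b : B) :
    scalarCommutator lT rT s (f a b) =
      f (scalarCommutator lA rA s a) b + f a (scalarCommutator lB rB s b) := by
  simp only [scalarCommutator_apply, hl, hr, map_sub, AddMonoidHom.sub_apply, balanced,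
    sub_add_sub_cancel]

end ScalarCommutator

section QuasiModule

variable {R A B T : Type*} [CommRing R] [AddCommGroup A] [AddCommGroup B] [AddCommGroup T]

theorem mem_kerFiltration_scalarCommutator_succ {l r : Module R A} {n : ℕ} {a : A} :
    a ∈ kerFiltration (scalarCommutator l r) (n + 1) ↔ a ∈ quasiFil l r n := by
  induction n generalizing a with
  | zero => simp only [mem_kerFiltration_succ, mem_kerFiltration_zero]; rfl
  | succ n ih => rw [mem_kerFiltration_succ]; exact forall_congr' fun s => ih

theorem isQuasiModule_iff_iSup_kerFiltration_eq_top {l r : Module R A} :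
    IsQuasiModule l r ↔ ⨆ n, kerFiltration (scalarCommutator l r) n = ⊤ := by
  simp only [AddSubmonoid.eq_top_iff', mem_iSup_kerFiltration]
  refine forall_congr' fun a => ⟨?_, ?_⟩
  · rintro ⟨n, ha⟩
    exact ⟨n + 1, mem_kerFiltration_scalarCommutator_succ.mpr ha⟩
  · rintro ⟨n, ha⟩
    exact ⟨n, mem_kerFiltration_scalarCommutator_succ.mp (kerFiltration_mono _ n.le_succ ha)⟩

theorem isQuasiModule_tensorProduct_general (lA rA : Module R A) (lB rB : Module R B)
    (lT rT : Module R T) (f : A →+ B →+ T)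
    (hf : AddSubmonoid.closure {t | ∃ a b, f a b = t} = ⊤)
    (balanced : ∀ s a b, f (ModSMul rA s a) b = f a (ModSMul lB s b))
    (hl : ∀ s a b, ModSMul lT s (f a b) = f (ModSMul lA s a) b)
    (hr : ∀ s a b, ModSMul rT s (f a b) = f a (ModSMul rB s b))
    (hA : IsQuasiModule lA rA) (hB : IsQuasiModule lB rB) : IsQuasiModule lT rT := by
  rw [isQuasiModule_iff_iSup_kerFiltration_eq_top] at hA hB ⊢
  exact iSup_kerFiltration_eq_top_of_leibniz (scalarCommutator_leibniz balanced hl hr) hf hA hB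

end QuasiModule

section TensorProduct

open scoped TensorProduct

variable (R M N : Type*) [CommSemiring R] [AddCommMonoid M] [AddCommMonoid N] [Module R M]
  [Module R N]

/-- The canonical biadditive map `(m, n) ↦ m ⊗ n`, forgetting the linearity of
`TensorProduct.mk`. -/
def tmulAddMonoidHom : M →+ N →+ M ⊗[R] N :=
  LinearMap.toAddMonoidHom'.comp (TensorProduct.mk R M N).toAddMonoidHom

theorem tmulAddMonoidHom_smul_left (r : R) (m : M) (n : N) :
    tmulAddMonoidHom R M N (r • m) n = tmulAddMonoidHom R M N m (r • n) :=
  TensorProduct.smul_tmul r m n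

theorem closure_tmulAddMonoidHom_eq_top :
    AddSubmonoid.closure {t | ∃ m n, tmulAddMonoidHom R M N m n = t} = ⊤ := by
  refine (AddSubmonoid.eq_top_iff' _).mpr fun t => ?_
  induction t with
  | zero => exact zero_mem _
  | tmul m n => exact AddSubmonoid.subset_closure ⟨m, n, rfl⟩
  | add x y hx hy => exact add_mem hx hy

end TensorProduct

/-- Let `R` be a commutative ring and `A`, `B` quasi-modules over `R`
(with commuting left and right actions `lA, rA` resp. `lB, rB`).  Then the tensor product
`A ⊗[R] B`, formed using the right `R`-module structure `rA` of `A` and the left `R`-module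
structure `lB` of `B`, and regarded as an `R`-`R`-bimodule via the left `R`-action through `A`
(the structure `lT`, characterized on pure tensors by `r • (a ⊗ b) = (r • a) ⊗ b`) and the
right `R`-action through `B` (the structure `rT`, characterized by
`(a ⊗ b) • r = a ⊗ (b • r)`), is again a quasi-module over `R`. -/
theorem isQuasiModule_tensorProduct
    {R A B : Type*} [CommRing R] [AddCommGroup A] [AddCommGroup B]
    (lA rA : Module R A) (lB rB : Module R B)
    (hA : ∀ (r s : R) (a : A), ModSMul lA r (ModSMul rA s a) = ModSMul rA s (ModSMul lA r a))
    (hB : ∀ (r s : R) (b : B), ModSMul lB r (ModSMul rB s b) = ModSMul rB s (ModSMul lB r b))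
    (hAq : IsQuasiModule lA rA) (hBq : IsQuasiModule lB rB)
    (lT rT : Module R (@TensorProduct R _ A B _ _ rA lB))
    (hT : ∀ (r s : R) (x : @TensorProduct R _ A B _ _ rA lB),
      ModSMul lT r (ModSMul rT s x) = ModSMul rT s (ModSMul lT r x))
    (hlT : ∀ (r : R) (a : A) (b : B),
      ModSMul lT r (@TensorProduct.tmul R _ A B _ _ rA lB a b) =
        @TensorProduct.tmul R _ A B _ _ rA lB (ModSMul lA r a) b)
    (hrT : ∀ (r : R) (a : A) (b : B),
      ModSMul rT r (@TensorProduct.tmul R _ A B _ _ rA lB a b) =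
        @TensorProduct.tmul R _ A B _ _ rA lB a (ModSMul rB r b)) :
    IsQuasiModule lT rT :=
  isQuasiModule_tensorProduct_general lA rA lB rB lT rT (@tmulAddMonoidHom R A B _ _ _ rA lB)
    (@closure_tmulAddMonoidHom_eq_top R A B _ _ _ rA lB)
    (@tmulAddMonoidHom_smul_left R A B _ _ _ rA lB) hlT hrT hAq hBq
end

section
/- Let σ : R → S be a flat epimorphism of commutative rings and let A be a quasi-module over R. Then the two canonical maps induced by σ, namely S ⊗_R A → S ⊗_R A ⊗_R S, s ⊗ a ↦ s ⊗ a ⊗ 1, and A ⊗_R S → S ⊗_R A ⊗_R S, a ⊗ s ↦ 1 ⊗ a ⊗ s, are bijective. -/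
/-!
An `R`-`R`-bimodule is a module over `E = R ⊗[ℤ] R`, and it is a quasi-module exactly when each
element is killed by a power of the diagonal ideal `D`, generated by the `r ⊗ 1 - 1 ⊗ r`. By
flatness, `S` kills a module on the left or on the right exactly when the corresponding annihilator
ideal of each element extends to the unit ideal of `S`. If the right annihilator `I` of `x` does,
then so do its powers; regarded as an ideal on the left, `I` is contained in `Ann_E x + D`, so a
high power of it lies in `Ann_E x + D ^ n = Ann_E x` and annihilates `x` on the left. Hence right
base change to `S` can be traded for left base change in testing whether kernels and cokernels of
`E`-linear maps of quasi-modules vanish. The unit `A → A ⊗[R] S` becomes bijective after right base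
change because `R → S` is an epimorphism, so it becomes bijective after left base change too.
-/

open TensorProduct Function

theorem addMonoidHom_ext_tmul {R M N P : Type*} [CommRing R] [AddCommGroup M] [Module R M]
    [AddCommGroup N] [Module R N] [AddCommGroup P] {f g : M ⊗[R] N →+ P}
    (h : ∀ x y, f (x ⊗ₜ y) = g (x ⊗ₜ y)) : f = g := by
  ext z
  induction z with
  | zero => simp only [map_zero]
  | tmul x y => exact h x y
  | add y z hy hz => simp only [map_add, hy, hz]

section FlatBaseChange

variable {R S M N : Type*} [CommRing R] [CommRing S] [Algebra R S]
  [AddCommGroup M] [Module R M] [AddCommGroup N] [Module R N]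

theorem rid_lTensor_subtype_mem_map (I : Ideal R) (w : S ⊗[R] I) :
    TensorProduct.rid R S (I.subtype.lTensor S w) ∈ I.map (algebraMap R S) := by
  induction w with
  | zero => simp
  | tmul s i =>
    simpa [Algebra.smul_def] using Ideal.mul_mem_right s _ (Ideal.mem_map_of_mem _ i.2)
  | add v w hv hw => simpa only [map_add] using add_mem hv hw

theorem torsionOf_one_tmul [Module.Flat R S] (x : M) :
    Ideal.torsionOf S (S ⊗[R] M) (1 ⊗ₜ x) = (Ideal.torsionOf R M x).map (algebraMap R S) := by
  apply le_antisymm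
  · intro s hs
    have hexact : Exact (Ideal.torsionOf R M x).subtype (LinearMap.toSpanSingleton R M x) :=
      LinearMap.exact_subtype_ker_map _
    have hker : (LinearMap.toSpanSingleton R M x).lTensor S (s ⊗ₜ 1) = 0 := by
      simpa [smul_tmul'] using hs
    obtain ⟨w, hw⟩ := (Module.Flat.lTensor_exact S hexact _).1 hker
    simpa [hw] using rid_lTensor_subtype_mem_map _ w
  · rw [Ideal.map_le_iff_le_comap]
    intro i hi
    rw [Ideal.mem_comap, Ideal.mem_torsionOf_iff, algebraMap_smul, ← tmul_smul,
      (Ideal.mem_torsionOf_iff x i).1 hi, tmul_zero]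

theorem subsingleton_tensorProduct_iff_map_torsionOf_eq_top [Module.Flat R S] :
    Subsingleton (S ⊗[R] M) ↔
      ∀ x : M, (Ideal.torsionOf R M x).map (algebraMap R S) = ⊤ := by
  simp_rw [← torsionOf_one_tmul, Ideal.torsionOf_eq_top_iff]
  refine ⟨fun _ _ => Subsingleton.elim _ _, fun h => subsingleton_of_forall_eq 0 fun z => ?_⟩
  induction z with
  | zero => rfl
  | tmul s x => rw [tmul_eq_smul_one_tmul, h, smul_zero]
  | add y z hy hz => rw [hy, hz, add_zero]

theorem lTensor_bijective_iff_subsingleton [Module.Flat R S] {K C : Type*} [AddCommGroup K]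
    [Module R K] [AddCommGroup C] [Module R C] {ι : K →ₗ[R] M} {φ : M →ₗ[R] N} {π : N →ₗ[R] C}
    (hι : Injective ι) (hιφ : Exact ι φ) (hφπ : Exact φ π) (hπ : Surjective π) :
    Bijective (φ.lTensor S) ↔ Subsingleton (S ⊗[R] K) ∧ Subsingleton (S ⊗[R] C) := by
  have hιS : Injective (ι.lTensor S) := Module.Flat.lTensor_preserves_injective_linearMap ι hι
  have hπS : Surjective (π.lTensor S) := LinearMap.lTensor_surjective S hπ
  have hιφS := Module.Flat.lTensor_exact S hιφ
  have hφπS := Module.Flat.lTensor_exact S hφπ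
  refine and_congr ⟨fun hφ => ?_, fun hK => ?_⟩ ⟨fun hφ => ?_, fun hC => ?_⟩
  · refine subsingleton_of_forall_eq 0 fun z => hιS (hφ ?_)
    rw [hιφS.apply_apply_eq_zero, map_zero, map_zero]
  · refine (injective_iff_map_eq_zero _).2 fun z hz => ?_
    obtain ⟨w, rfl⟩ := (hιφS z).1 hz
    rw [Subsingleton.elim w 0, map_zero]
  · refine subsingleton_of_forall_eq 0 (hπS.forall.2 (hφ.forall.2 fun z => ?_))
    exact hφπS.apply_apply_eq_zero z
  · exact fun y => (hφπS y).1 (Subsingleton.elim _ _)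

end FlatBaseChange

/-- A module all of whose elements are annihilated by a power of the ideal `I`. An `R`-`R`-bimodule
is a quasi-module exactly when it is power torsion, as a module over `R ⊗[ℤ] R`, for the kernel of
the multiplication map. -/
def IsPowerTorsion {E : Type*} [CommRing E] (I : Ideal E) (M : Type*) [AddCommGroup M]
    [Module E M] : Prop :=
  ∀ x : M, ∃ n : ℕ, I ^ n ≤ Ideal.torsionOf E M x

namespace IsPowerTorsion

variable {E M N : Type*} [CommRing E] {I : Ideal E} [AddCommGroup M] [Module E M]
  [AddCommGroup N] [Module E N]

theorem of_injective (hN : IsPowerTorsion I N) (φ : M →ₗ[E] N) (hφ : Injective φ) :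
    IsPowerTorsion I M := fun x =>
  (hN (φ x)).imp fun _ hn e he => hφ <| by simpa using hn he

theorem of_surjective (hM : IsPowerTorsion I M) (φ : M →ₗ[E] N) (hφ : Surjective φ) :
    IsPowerTorsion I N := hφ.forall.2 fun x =>
  (hM x).imp fun _ hn e he => by
    have hex : e • x = 0 := hn he
    simpa using congrArg φ hex

theorem tensorProduct {R P : Type*} [CommRing R] [Module R M] [SMulCommClass R E M]
    [AddCommGroup P] [Module R P] (hM : IsPowerTorsion I M) :
    IsPowerTorsion I (M ⊗[R] P) := fun z => by
  induction z with
  | zero => exact ⟨0, by simp⟩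
  | tmul x p =>
    refine (hM x).imp fun n hn e he => ?_
    have hex : e • x = 0 := hn he
    simp [smul_tmul', hex]
  | add y z hy hz =>
    obtain ⟨k, hk⟩ := hy
    obtain ⟨n, hn⟩ := hz
    refine ⟨max k n, fun e he => ?_⟩
    have hey : e • y = 0 := hk (Ideal.pow_le_pow_right (le_max_left k n) he)
    have hez : e • z = 0 := hn (Ideal.pow_le_pow_right (le_max_right k n) he)
    simp [hey, hez]

end IsPowerTorsion

-- `L` and `R` are two names for the ground ring, so that instances tell the left action on a
-- bimodule from the right one; `E` plays the role of `L ⊗[ℤ] R` and `D` that of its diagonal ideal.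
section Bimodule

variable {L R S E M N : Type*} [CommRing L] [CommRing R] [CommRing S] [CommRing E]
  [Algebra L E] [Algebra R E] [Algebra L S] [Algebra R S]
  [AddCommGroup M] [Module E M] [Module L M] [IsScalarTower L E M] [Module R M]
  [IsScalarTower R E M]
  [AddCommGroup N] [Module E N] [Module L N] [IsScalarTower L E N] [Module R N]
  [IsScalarTower R E N]

section Transfer

variable [Algebra R L] [IsScalarTower R L S] {D : Ideal E}

theorem map_torsionOf_eq_top_of_pow_le
    (hD : ∀ r : R, algebraMap L E (algebraMap R L r) - algebraMap R E r ∈ D) {x : M} {n : ℕ}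
    (hx : D ^ n ≤ Ideal.torsionOf E M x)
    (hR : (Ideal.torsionOf R M x).map (algebraMap R S) = ⊤) :
    (Ideal.torsionOf L M x).map (algebraMap L S) = ⊤ := by
  set J : Ideal L := (Ideal.torsionOf R M x).map (algebraMap R L)
  have hJE : J.map (algebraMap L E) ≤ Ideal.torsionOf E M x ⊔ D := by
    rw [Ideal.map_map, Ideal.map_le_iff_le_comap]
    intro r hr
    have hrE : algebraMap R E r ∈ Ideal.torsionOf E M x := by simpa using hr
    simpa using add_mem (Ideal.mem_sup_left hrE) (Ideal.mem_sup_right (hD r))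
  have hJpow : (J ^ (1 + n)).map (algebraMap L E) ≤ Ideal.torsionOf E M x := calc
    (J ^ (1 + n)).map (algebraMap L E) = J.map (algebraMap L E) ^ (1 + n) := Ideal.map_pow ..
    _ ≤ (Ideal.torsionOf E M x ⊔ D) ^ (1 + n) := Ideal.pow_right_mono hJE _
    _ ≤ Ideal.torsionOf E M x ^ 1 ⊔ D ^ n := Ideal.sup_pow_add_le_pow_sup_pow
    _ ≤ Ideal.torsionOf E M x := by simpa using hx
  have hJL : J ^ (1 + n) ≤ Ideal.torsionOf L M x := fun l hl => by
    simpa using hJpow (Ideal.mem_map_of_mem _ hl)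
  refine top_unique (le_trans ?_ (Ideal.map_mono hJL))
  rw [Ideal.map_pow, Ideal.map_map, ← IsScalarTower.algebraMap_eq, hR, Ideal.top_pow]

variable [Module.Flat L S] [Module.Flat R S]

theorem subsingleton_tensorProduct_left_of_right
    (hD : ∀ r : R, algebraMap L E (algebraMap R L r) - algebraMap R E r ∈ D)
    (hM : IsPowerTorsion D M) (hR : Subsingleton (S ⊗[R] M)) : Subsingleton (S ⊗[L] M) := by
  rw [subsingleton_tensorProduct_iff_map_torsionOf_eq_top] at hR ⊢
  intro x
  obtain ⟨n, hn⟩ := hM x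
  exact map_torsionOf_eq_top_of_pow_le hD hn (hR x)

theorem lTensor_left_bijective_of_right
    (hD : ∀ r : R, algebraMap L E (algebraMap R L r) - algebraMap R E r ∈ D)
    (hM : IsPowerTorsion D M) (hN : IsPowerTorsion D N) (φ : M →ₗ[E] N)
    (hφ : Bijective ((φ.restrictScalars R).lTensor S)) :
    Bijective ((φ.restrictScalars L).lTensor S) := by
  let ι : LinearMap.ker φ →ₗ[E] M := (LinearMap.ker φ).subtype
  let π : N →ₗ[E] N ⧸ LinearMap.range φ := (LinearMap.range φ).mkQ
  have hι : Injective ι := Subtype.val_injective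
  have hιφ : Exact ι φ := LinearMap.exact_subtype_ker_map φ
  have hφπ : Exact φ π := LinearMap.exact_map_mkQ_range φ
  have hπ : Surjective π := Submodule.mkQ_surjective _
  obtain ⟨hker, hcoker⟩ := (lTensor_bijective_iff_subsingleton (ι := ι.restrictScalars R)
    (φ := φ.restrictScalars R) (π := π.restrictScalars R) hι hιφ hφπ hπ).1 hφ
  refine (lTensor_bijective_iff_subsingleton (ι := ι.restrictScalars L)
    (φ := φ.restrictScalars L) (π := π.restrictScalars L) hι hιφ hφπ hπ).2 ⟨?_, ?_⟩
  · exact subsingleton_tensorProduct_left_of_right hD (hM.of_injective ι hι) hker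
  · exact subsingleton_tensorProduct_left_of_right hD (hN.of_surjective π hπ) hcoker

end Transfer

variable (R S E M) in
/-- The base change unit `x ↦ x ⊗ 1` for the right action, linear over the ring `E` through which
both actions on the bimodule `M` factor. -/
def tmulOne : M →ₗ[E] M ⊗[R] S where
  toFun x := x ⊗ₜ 1
  map_add' x y := add_tmul x y 1
  map_smul' e x := (smul_tmul' e x 1).symm

theorem lTensor_tmulOne_bijective [Algebra.IsEpi R S] :
    Bijective (((tmulOne R S E M).restrictScalars R).lTensor S) := by
  let e : S ⊗[R] (M ⊗[R] S) ≃ₗ[R] S ⊗[R] M :=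
    (TensorProduct.comm R M S).lTensor S ≪≫ₗ
      (TensorProduct.lid' R S (S ⊗[R] M)).restrictScalars R
  have he : e ∘ ((tmulOne R S E M).restrictScalars R).lTensor S = id := by
    have : e.toLinearMap ∘ₗ ((tmulOne R S E M).restrictScalars R).lTensor S = .id := by
      ext s x
      simp [e, tmulOne, smul_tmul']
    exact congrArg DFunLike.coe this
  exact (Bijective.of_comp_iff' e.bijective _).1 (he ▸ bijective_id)

theorem lTensor_tmulOne_bijective_of_isPowerTorsion [SMulCommClass R L M] [Algebra R L]
    [IsScalarTower R L S] [Module.Flat L S] [Module.Flat R S] [Algebra.IsEpi R S] {D : Ideal E}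
    (hD : ∀ r : R, algebraMap L E (algebraMap R L r) - algebraMap R E r ∈ D)
    (hM : IsPowerTorsion D M) :
    Bijective (((tmulOne R S E M).restrictScalars L).lTensor S) :=
  lTensor_left_bijective_of_right hD hM hM.tensorProduct _ lTensor_tmulOne_bijective

variable (L R E M) in
/-- The exchange `(x ⊗ p) ⊗ q ↦ (x ⊗ q) ⊗ p` of the factors tensored with a bimodule along its two
actions. -/
noncomputable def tensorRightComm [SMulCommClass R L M] [SMulCommClass L R M]
    (P Q : Type*) [AddCommGroup P] [Module R P] [AddCommGroup Q] [Module L Q] :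
    (M ⊗[R] P) ⊗[L] Q ≃ₗ[E] (M ⊗[L] Q) ⊗[R] P :=
  (AlgebraTensorModule.cancelBaseChange L E E (M ⊗[R] P) Q).symm ≪≫ₗ
  (AlgebraTensorModule.cancelBaseChange R E E M P).symm.rTensor (E ⊗[L] Q) ≪≫ₗ
  TensorProduct.rightComm E M (E ⊗[R] P) (E ⊗[L] Q) ≪≫ₗ
  (AlgebraTensorModule.cancelBaseChange L E E M Q).rTensor (E ⊗[R] P) ≪≫ₗ
  AlgebraTensorModule.cancelBaseChange R E E (M ⊗[L] Q) P

theorem tensorRightComm_tmul [SMulCommClass R L M] [SMulCommClass L R M]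
    {P Q : Type*} [AddCommGroup P] [Module R P] [AddCommGroup Q] [Module L Q]
    (x : M) (p : P) (q : Q) :
    tensorRightComm L R E M P Q ((x ⊗ₜ p) ⊗ₜ q) = (x ⊗ₜ q) ⊗ₜ p := by
  simp [tensorRightComm]

section CanonicalMaps

variable [SMulCommClass R L M] [Module.Flat L S] [Module.Flat R S] {D : Ideal E}

theorem left_canonical_map_bijective [Algebra R L] [IsScalarTower R L S] [Algebra.IsEpi R S]
    (hD : ∀ r : R, algebraMap L E (algebraMap R L r) - algebraMap R E r ∈ D)
    (hM : IsPowerTorsion D M) (f : S ⊗[L] M →+ S ⊗[L] (M ⊗[R] S))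
    (hf : ∀ (s : S) (x : M), f (s ⊗ₜ x) = s ⊗ₜ (x ⊗ₜ 1)) : Bijective f := by
  have hf_eq : f = (((tmulOne R S E M).restrictScalars L).lTensor S).toAddMonoidHom :=
    addMonoidHom_ext_tmul hf
  rw [hf_eq]
  exact lTensor_tmulOne_bijective_of_isPowerTorsion hD hM

-- By the exchange of factors this is `left_canonical_map_bijective` with the two actions swapped.
theorem right_canonical_map_bijective [SMulCommClass L R M] [Algebra L R] [IsScalarTower L R S]
    [Algebra.IsEpi L S] (hD : ∀ l : L, algebraMap R E (algebraMap L R l) - algebraMap L E l ∈ D)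
    (hM : IsPowerTorsion D M) (g : M ⊗[R] S →+ S ⊗[L] (M ⊗[R] S))
    (hg : ∀ (x : M) (s : S), g (x ⊗ₜ s) = 1 ⊗ₜ (x ⊗ₜ s)) : Bijective g := by
  let exchange : S ⊗[L] (M ⊗[R] S) ≃+ S ⊗[R] (M ⊗[L] S) :=
    (TensorProduct.comm L S (M ⊗[R] S)).toAddEquiv.trans <|
      (tensorRightComm L R E M S S).toAddEquiv.trans
        (TensorProduct.comm R (M ⊗[L] S) S).toAddEquiv
  let g' : S ⊗[R] M →+ S ⊗[R] (M ⊗[L] S) :=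
    exchange.toAddMonoidHom.comp (g.comp (TensorProduct.comm R S M).toAddMonoidHom)
  have hg' : ∀ (s : S) (x : M), g' (s ⊗ₜ x) = s ⊗ₜ (x ⊗ₜ 1) := fun s x => by
    simp [g', exchange, hg, tensorRightComm_tmul]
  have hbij : Bijective (exchange ∘ g ∘ TensorProduct.comm R S M) :=
    left_canonical_map_bijective hD hM g' hg'
  exact (Bijective.of_comp_iff g (TensorProduct.comm R S M).bijective).1
    ((Bijective.of_comp_iff' exchange.bijective _).1 hbij)

end CanonicalMaps

end Bimodule

theorem module_tensorProduct_eq_leftModule {L R M P : Type*} [CommRing L] [CommRing R]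
    [AddCommGroup M] [Module L M] [Module R M] [SMulCommClass R L M] [AddCommGroup P] [Module R P]
    (m : Module L (M ⊗[R] P))
    (hm : ∀ (l : L) (x : M) (p : P), ModSMul m l (x ⊗ₜ p) = (l • x) ⊗ₜ p) :
    m = TensorProduct.leftModule := by
  refine Module.ext' _ _ fun l z => ?_
  have hsmul : @Module.toAddMonoidEnd L (M ⊗[R] P) _ _ m l =
      @Module.toAddMonoidEnd L (M ⊗[R] P) _ _ TensorProduct.leftModule l :=
    addMonoidHom_ext_tmul (hm l)
  exact DFunLike.congr_fun hsmul z

universe u v in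
theorem exists_commRing_compHom_eq {L : Type u} {R : Type v} {M : Type*} [CommRing L]
    [CommRing R] [AddCommGroup M] [lM : Module L M] [rM : Module R M] [SMulCommClass L R M] :
    ∃ (E : Type (max u v)) (_ : CommRing E) (_ : Module E M) (i : L →+* E) (j : R →+* E),
      lM = Module.compHom M i ∧ rM = Module.compHom M j := by
  refine ⟨L ⊗[ℤ] R, inferInstance, TensorProduct.Algebra.module,
    Algebra.TensorProduct.includeLeftRingHom, Algebra.TensorProduct.includeRight.toRingHom,
    Module.ext' _ _ fun l x => ?_, Module.ext' _ _ fun r x => ?_⟩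
  · exact (congrArg (l • ·) (one_smul R x)).symm
  · exact (one_smul L (r • x)).symm

theorem span_pow_succ_le_torsionOf {E M : Type*} [CommRing E] [AddCommGroup M] [Module E M]
    {G : Set E} {n : ℕ} {x : M} (h : ∀ d ∈ G, Ideal.span G ^ n ≤ Ideal.torsionOf E M (d • x)) :
    Ideal.span G ^ (n + 1) ≤ Ideal.torsionOf E M x := by
  rw [pow_succ, Ideal.mul_le]
  intro e he d hd
  have hG : Ideal.span G ≤ Ideal.torsionOf E M (e • x) := Ideal.span_le.2 fun d hd => by
    have hedx : e • d • x = 0 := h d hd he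
    rwa [SetLike.mem_coe, Ideal.mem_torsionOf_iff, smul_comm]
  have hdex : d • e • x = 0 := hG hd
  rwa [Ideal.mem_torsionOf_iff, mul_smul, smul_comm]

theorem IsQuasiModule.isPowerTorsion {R E A : Type*} [CommRing R] [CommRing E] [AddCommGroup A]
    [Module E A] {i j : R →+* E}
    (h : IsQuasiModule (Module.compHom A i) (Module.compHom A j)) :
    IsPowerTorsion (Ideal.span (Set.range fun r => i r - j r)) A := by
  have hfil : ∀ (n : ℕ), ∀ a ∈ quasiFil (Module.compHom A i) (Module.compHom A j) n,
      Ideal.span (Set.range fun r => i r - j r) ^ (n + 1) ≤ Ideal.torsionOf E A a := by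
    intro n
    induction n with
    | zero =>
      refine fun a ha => span_pow_succ_le_torsionOf (Set.forall_mem_range.2 fun r => ?_)
      have hra : (i r - j r) • a = 0 := (sub_smul ..).trans (ha r)
      simp [hra]
    | succ n ih =>
      refine fun a ha => span_pow_succ_le_torsionOf (Set.forall_mem_range.2 fun r => ?_)
      rw [sub_smul]
      exact ih _ (ha r)
  exact fun a => (h a).elim fun n hn => ⟨n + 1, hfil n a hn⟩

theorem bijective_canonical_maps_of_flat_epi
    {R S A : Type*} [CommRing R] [CommRing S] [Algebra R S]
    [Module.Flat R S]
    (hepi : Function.Bijective (LinearMap.mul' R S))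
    [AddCommGroup A] (lA rA : Module R A)
    (hA : ∀ (r s : R) (a : A), ModSMul lA r (ModSMul rA s a) = ModSMul rA s (ModSMul lA r a))
    (hAq : IsQuasiModule lA rA)
    -- the left `R`-module structure on `A ⊗[R] S` induced by the left action on `A`:
    (m : Module R (@TensorProduct R _ A S _ _ rA _))
    (hm : ∀ (r : R) (a : A) (s : S),
      ModSMul m r (@TensorProduct.tmul R _ A S _ _ rA _ a s) =
        @TensorProduct.tmul R _ A S _ _ rA _ (ModSMul lA r a) s)
    -- the canonical map `S ⊗[R] A → S ⊗[R] A ⊗[R] S`, `s ⊗ a ↦ s ⊗ a ⊗ 1`: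
    (f : (@TensorProduct R _ S A _ _ _ lA) →+
      (@TensorProduct R _ S (@TensorProduct R _ A S _ _ rA _) _ _ _ m))
    (hf : ∀ (s : S) (a : A),
      f (@TensorProduct.tmul R _ S A _ _ _ lA s a) =
        @TensorProduct.tmul R _ S (@TensorProduct R _ A S _ _ rA _) _ _ _ m s
          (@TensorProduct.tmul R _ A S _ _ rA _ a 1))
    -- the canonical map `A ⊗[R] S → S ⊗[R] A ⊗[R] S`, `a ⊗ s ↦ 1 ⊗ a ⊗ s`:
    (g : (@TensorProduct R _ A S _ _ rA _) →+
      (@TensorProduct R _ S (@TensorProduct R _ A S _ _ rA _) _ _ _ m))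
    (hg : ∀ (a : A) (s : S),
      g (@TensorProduct.tmul R _ A S _ _ rA _ a s) =
        @TensorProduct.tmul R _ S (@TensorProduct R _ A S _ _ rA _) _ _ _ m 1
          (@TensorProduct.tmul R _ A S _ _ rA _ a s)) :
    Function.Bijective f ∧ Function.Bijective g := by
  have hcomm := @SMulCommClass.mk R R A lA.toSMul rA.toSMul hA
  have hcomm' := @SMulCommClass.mk R R A rA.toSMul lA.toSMul fun r s a => (hA s r a).symm
  have hS : Algebra.IsEpi R S := ⟨hepi.injective⟩
  obtain rfl := @module_tensorProduct_eq_leftModule R R A S _ _ _ lA rA hcomm' _ _ m hm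
  obtain ⟨E, _, _, i, j, rfl, rfl⟩ := @exists_commRing_compHom_eq R R A _ _ _ lA rA hcomm
  have hi := @IsScalarTower.mk R E A i.toAlgebra.toSMul _ (Module.compHom A i).toSMul
    fun _ _ _ => mul_smul ..
  have hj := @IsScalarTower.mk R E A j.toAlgebra.toSMul _ (Module.compHom A j).toSMul
    fun _ _ _ => mul_smul ..
  let D : Ideal E := Ideal.span (Set.range fun r => i r - j r)
  have hD (r : R) : i r - j r ∈ D := Ideal.subset_span (Set.mem_range_self r)
  have hD' (r : R) : j r - i r ∈ D := neg_sub (i r) (j r) ▸ neg_mem (hD r)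
  have hAD : IsPowerTorsion D A := hAq.isPowerTorsion
  constructor
  · exact @left_canonical_map_bijective R R S E A _ _ _ _ i.toAlgebra j.toAlgebra _ _ _ _
      (Module.compHom A i) hi (Module.compHom A j) hj hcomm' _ _ _ _ _ _ hD hAD f hf
  · exact @right_canonical_map_bijective R R S E A _ _ _ _ i.toAlgebra j.toAlgebra _ _ _ _
      (Module.compHom A i) hi (Module.compHom A j) hj hcomm' _ _ _ hcomm _ _ _ hD' hAD g hg
end

section
/- Let σ : R → S be a flat epimorphism of commutative rings and let A be a quasi-module over R. Then S ⊗_R A ⊗_R S, equipped with the S-S-bimodule structure in which S acts on the left through the first tensor factor and on the right through the last tensor factor, is a quasi-module over S. -/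
/-!
An `S`-`S`-bimodule `M` is a module over `E = S ⊗[ℤ] S`, and the `n`-th step of its filtration is
the `I ^ (n + 1)`-torsion, where `I` is the ideal generated by the elements `s ⊗ 1 - 1 ⊗ s`. Since
`R → S` is an epimorphism, `I` is already generated by the differences with `s` in the image of
`R`: modulo the ideal they generate, the two inclusions `S → E` agree on `R`, hence coincide.
So the image in `S ⊗[R] A ⊗[R] S` of every element of the quasi-module `A` is torsion for a power
of `I`, and these images generate `S ⊗[R] A ⊗[R] S` over `E`.
-/

open scoped TensorProduct
open Submodule

section Torsion

variable {R A E M : Type*} [CommRing R] [AddCommGroup A] [CommRing E] [AddCommGroup M] [Module E M]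

theorem mem_torsionBySet_mul_span_iff {I : Ideal E} {G : Set E} {x : M} :
    x ∈ torsionBySet E M ↑(I * Ideal.span G) ↔ ∀ g ∈ G, g • x ∈ torsionBySet E M I := by
  simp only [mem_torsionBySet_iff, Subtype.forall, SetLike.mem_coe]
  constructor
  · intro hx g hg e he
    rw [smul_smul]
    exact hx _ (Ideal.mul_mem_mul he (Ideal.subset_span hg))
  · intro hx
    suffices I * Ideal.span G ≤ Ideal.torsionOf E M x from this
    rw [Ideal.mul_le]
    intro e he i hi
    have hG : Ideal.span G ≤ Ideal.torsionOf E M (e • x) := Ideal.span_le.2 fun g hg ↦ by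
      simpa [smul_comm g e] using hx g hg e he
    simpa [mul_smul, smul_comm e i] using hG hi

theorem map_mem_torsionBySet_of_mem_quasiFil {l r : Module R A} {d : R → E} (f : A →+ M)
    (hf : ∀ c a, f (ModSMul l c a - ModSMul r c a) = d c • f a) {n : ℕ} {a : A}
    (ha : a ∈ quasiFil l r n) :
    f a ∈ torsionBySet E M ↑(Ideal.span (Set.range d) ^ (n + 1)) := by
  induction n generalizing a with
  | zero =>
    rw [pow_succ, mem_torsionBySet_mul_span_iff, Set.forall_mem_range]
    intro c
    rw [← hf, ha c, map_zero]
    exact zero_mem _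
  | succ n ih =>
    rw [pow_succ, mem_torsionBySet_mul_span_iff, Set.forall_mem_range]
    intro c
    rw [← hf]
    exact ih (ha c)

theorem mem_quasiFil_of_mem_torsionBySet {l r : Module R M} {d : R → E}
    (hd : ∀ c x, ModSMul l c x - ModSMul r c x = d c • x) {n : ℕ} {x : M}
    (hx : x ∈ torsionBySet E M ↑(Ideal.span (Set.range d) ^ (n + 1))) :
    x ∈ quasiFil l r n := by
  induction n generalizing x with
  | zero =>
    rw [pow_succ, mem_torsionBySet_mul_span_iff, Set.forall_mem_range] at hx
    exact fun c ↦ by simpa [hd] using hx c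
  | succ n ih =>
    rw [pow_succ, mem_torsionBySet_mul_span_iff, Set.forall_mem_range] at hx
    exact fun c ↦ ih (hd c x ▸ hx c)

end Torsion

section Epimorphism

variable {R S E : Type*} [CommRing R] [CommRing S] [Algebra R S] [Algebra.IsEpi R S] [CommRing E]

theorem ringHom_eq_of_comp_algebraMap_eq_of_isEpi {α β : S →+* E}
    (h : α.comp (algebraMap R S) = β.comp (algebraMap R S)) : α = β := by
  let : Algebra R E := (α.comp (algebraMap R S)).toAlgebra
  let α' : S →ₐ[R] E := { α with commutes' := fun _ ↦ rfl }
  let β' : S →ₐ[R] E := { β with commutes' := fun c ↦ (RingHom.congr_fun h c).symm }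
  ext s
  have hs := (Algebra.isEpi_iff_forall_one_tmul_eq R S).1 inferInstance s
  simpa [α', β'] using congrArg (Algebra.TensorProduct.lift α' β' fun _ _ ↦ .all _ _) hs.symm

theorem span_range_sub_algebraMap_eq_of_isEpi (α β : S →+* E) :
    Ideal.span (Set.range fun c : R ↦ α (algebraMap R S c) - β (algebraMap R S c)) =
      Ideal.span (Set.range fun s ↦ α s - β s) := by
  apply le_antisymm
  · exact Ideal.span_mono (Set.range_comp_subset_range (algebraMap R S) fun s ↦ α s - β s)
  · set J := Ideal.span (Set.range fun c : R ↦ α (algebraMap R S c) - β (algebraMap R S c))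
    have hJ : (Ideal.Quotient.mk J).comp α = (Ideal.Quotient.mk J).comp β :=
      ringHom_eq_of_comp_algebraMap_eq_of_isEpi (R := R) <| RingHom.ext fun c ↦
        Ideal.Quotient.eq.2 (Ideal.subset_span ⟨c, rfl⟩)
    rw [Ideal.span_le, Set.range_subset_iff]
    exact fun s ↦ Ideal.Quotient.eq.1 (RingHom.congr_fun hJ s)

end Epimorphism

section Bimodule

variable {S M : Type*} [CommRing S] [AddCommGroup M]

/-- The action of the enveloping ring `S ⊗[ℤ] S` on an `S`-`S`-bimodule `M`, turning `M` into a
module over a commutative ring; `s ⊗ t` acts by `x ↦ s x t`. -/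
noncomputable def bimoduleAction (l r : Module S M)
    (hlr : ∀ s t x, ModSMul l s (ModSMul r t x) = ModSMul r t (ModSMul l s x)) :
    S ⊗[ℤ] S →ₐ[ℤ] AddMonoid.End M :=
  Algebra.TensorProduct.lift (@Module.toAddMonoidEnd S M _ _ l).toIntAlgHom
    (@Module.toAddMonoidEnd S M _ _ r).toIntAlgHom fun s t ↦ by
      ext x
      exact hlr s t x

theorem bimoduleAction_tmul {l r : Module S M}
    (hlr : ∀ s t x, ModSMul l s (ModSMul r t x) = ModSMul r t (ModSMul l s x)) (s t : S) (x : M) :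
    bimoduleAction l r hlr (s ⊗ₜ t) x = ModSMul l s (ModSMul r t x) :=
  DFunLike.congr_fun (Algebra.TensorProduct.lift_tmul _ _ _ s t) x

theorem one_modSMul (l : Module S M) (x : M) : ModSMul l 1 x = x :=
  one_smul S x

end Bimodule

section Generation

variable {R S A E M : Type*} [CommRing R] [CommRing S] [Algebra R S] [Algebra.IsEpi R S]
  [AddCommGroup A] [AddCommGroup M] {lA rA : Module R A} {lM rM : Module S M} {f : A →+ M}

theorem IsQuasiModule.of_isEpi_of_span_range_eq_top [CommRing E] [Module E M] {α β : S →+* E}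
    (hA : IsQuasiModule lA rA)
    (hl : ∀ s x, ModSMul lM s x = α s • x) (hr : ∀ s x, ModSMul rM s x = β s • x)
    (hfl : ∀ c a, f (ModSMul lA c a) = ModSMul lM (algebraMap R S c) (f a))
    (hfr : ∀ c a, f (ModSMul rA c a) = ModSMul rM (algebraMap R S c) (f a))
    (hspan : span E (Set.range f) = ⊤) : IsQuasiModule lM rM := by
  let I : Ideal E := Ideal.span (Set.range fun s ↦ α s - β s)
  have hI : Ideal.span (Set.range fun c : R ↦ α (algebraMap R S c) - β (algebraMap R S c)) = I :=
    span_range_sub_algebraMap_eq_of_isEpi α β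
  have hmono : Monotone fun n ↦ torsionBySet E M ↑(I ^ (n + 1)) := fun i j hij ↦
    torsionBySet_le_torsionBySet_pow _ _ (Nat.succ_le_succ hij) I
  have htorsion : ⨆ n, torsionBySet E M ↑(I ^ (n + 1)) = ⊤ := by
    rw [eq_top_iff, ← hspan, span_le, Set.range_subset_iff]
    intro a
    obtain ⟨n, ha⟩ := hA a
    refine mem_iSup_of_mem n ?_
    rw [← hI]
    refine map_mem_torsionBySet_of_mem_quasiFil f (fun c b ↦ ?_) ha
    rw [map_sub, hfl, hfr, hl, hr, sub_smul]
  intro x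
  have hx : x ∈ ⨆ n, torsionBySet E M ↑(I ^ (n + 1)) := htorsion ▸ mem_top
  obtain ⟨n, hxn⟩ := (mem_iSup_of_directed _ hmono.directed_le).1 hx
  exact ⟨n, mem_quasiFil_of_mem_torsionBySet (fun s y ↦ by rw [hl, hr, sub_smul]) hxn⟩

theorem IsQuasiModule.of_isEpi_of_closure_eq_top (hA : IsQuasiModule lA rA)
    (hlr : ∀ s t x, ModSMul lM s (ModSMul rM t x) = ModSMul rM t (ModSMul lM s x))
    (hfl : ∀ c a, f (ModSMul lA c a) = ModSMul lM (algebraMap R S c) (f a))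
    (hfr : ∀ c a, f (ModSMul rA c a) = ModSMul rM (algebraMap R S c) (f a))
    (hclosure : AddSubgroup.closure {x | ∃ s a t, ModSMul lM s (ModSMul rM t (f a)) = x} = ⊤) :
    IsQuasiModule lM rM := by
  let : Module (S ⊗[ℤ] S) M := Module.compHom M (bimoduleAction lM rM hlr).toRingHom
  have htmul (s t : S) (x : M) : (s ⊗ₜ[ℤ] t) • x = ModSMul lM s (ModSMul rM t x) :=
    bimoduleAction_tmul hlr s t x
  refine hA.of_isEpi_of_span_range_eq_top (E := S ⊗[ℤ] S) (f := f)
    (α := Algebra.TensorProduct.includeLeftRingHom)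
    (β := (Algebra.TensorProduct.includeRight : S →ₐ[ℤ] S ⊗[ℤ] S)) ?_ ?_ hfl hfr ?_
  · intro s x
    exact (htmul s 1 x).trans (congrArg _ (one_modSMul rM x)) |>.symm
  · intro s x
    exact (htmul 1 s x).trans (one_modSMul lM _) |>.symm
  · rw [← toAddSubgroup_eq_top, eq_top_iff, ← hclosure, AddSubgroup.closure_le]
    rintro _ ⟨s, a, t, rfl⟩
    rw [← htmul]
    exact smul_mem _ _ (subset_span ⟨a, rfl⟩)

end Generation

section TensorProduct

variable {R M N : Type*} [CommRing R] [AddCommGroup M] [AddCommGroup N] [Module R M] [Module R N]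

theorem closure_image2_tmul_eq_top {G : Set N} (hG : AddSubgroup.closure G = ⊤) :
    AddSubgroup.closure (Set.image2 (· ⊗ₜ[R] ·) (Set.univ : Set M) G) = ⊤ := by
  rw [eq_top_iff]
  rintro z -
  induction z with
  | zero => exact zero_mem _
  | add z w hz hw => exact add_mem hz hw
  | tmul x y =>
    have hy : y ∈ AddSubgroup.closure G := hG ▸ AddSubgroup.mem_top y
    induction hy using AddSubgroup.closure_induction with
    | mem y hy => exact AddSubgroup.subset_closure ⟨x, trivial, y, hy, rfl⟩
    | zero => simp
    | add y w _ _ hy hw => simpa [TensorProduct.tmul_add] using add_mem hy hw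
    | neg y _ hy => simpa [TensorProduct.tmul_neg] using neg_mem hy

variable {S : Type*} [CommRing S] [Algebra R S]

theorem algebraMap_tmul_eq_one_tmul_smul (c : R) (x : M) :
    algebraMap R S c ⊗ₜ[R] x = 1 ⊗ₜ[R] (c • x) := by
  rw [Algebra.algebraMap_eq_smul_one, TensorProduct.smul_tmul]

theorem tmul_algebraMap_eq_smul_tmul_one (c : R) (x : M) :
    x ⊗ₜ[R] algebraMap R S c = (c • x) ⊗ₜ[R] 1 := by
  rw [Algebra.algebraMap_eq_smul_one, TensorProduct.smul_tmul]

end TensorProduct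

theorem isQuasiModule_base_change_of_flat_epi_general
    {R S A : Type*} [CommRing R] [CommRing S] [Algebra R S]
    [Algebra.IsEpi R S]
    [AddCommGroup A] (lA rA : Module R A)
    (hAq : IsQuasiModule lA rA)
    (m : Module R (@TensorProduct R _ A S _ _ rA _))
    (hm : ∀ (r : R) (a : A) (s : S),
      ModSMul m r (@TensorProduct.tmul R _ A S _ _ rA _ a s) =
        @TensorProduct.tmul R _ A S _ _ rA _ (ModSMul lA r a) s)
    (lT rT : Module S (@TensorProduct R _ S (@TensorProduct R _ A S _ _ rA _) _ _ _ m))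
    (hT : ∀ (s₁ s₂ : S) (x : @TensorProduct R _ S (@TensorProduct R _ A S _ _ rA _) _ _ _ m),
      ModSMul lT s₁ (ModSMul rT s₂ x) = ModSMul rT s₂ (ModSMul lT s₁ x))
    (hlT : ∀ (s' s : S) (x : @TensorProduct R _ A S _ _ rA _),
      ModSMul lT s' (@TensorProduct.tmul R _ S (@TensorProduct R _ A S _ _ rA _) _ _ _ m s x) =
        @TensorProduct.tmul R _ S (@TensorProduct R _ A S _ _ rA _) _ _ _ m (s' * s) x)
    (hrT : ∀ (s' s : S) (a : A) (t : S),
      ModSMul rT s' (@TensorProduct.tmul R _ S (@TensorProduct R _ A S _ _ rA _) _ _ _ m s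
          (@TensorProduct.tmul R _ A S _ _ rA _ a t)) =
        @TensorProduct.tmul R _ S (@TensorProduct R _ A S _ _ rA _) _ _ _ m s
          (@TensorProduct.tmul R _ A S _ _ rA _ a (t * s'))) :
    IsQuasiModule lT rT := by
  let f := AddMonoidHom.mk' (fun a : A ↦ @TensorProduct.tmul R _ S _ _ _ _ m 1
      (@TensorProduct.tmul R _ A S _ _ rA _ a 1)) fun a b ↦ by
    rw [@TensorProduct.add_tmul R _ A S _ _ rA, @TensorProduct.tmul_add R _ S _ _ _ _ m]
  have hf (a : A) : f a = @TensorProduct.tmul R _ S _ _ _ _ m 1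
      (@TensorProduct.tmul R _ A S _ _ rA _ a 1) := rfl
  refine hAq.of_isEpi_of_closure_eq_top (f := f) hT (fun c a ↦ ?_) (fun c a ↦ ?_) ?_
  · rw [hf, hf, hlT, mul_one, ← hm]
    exact (@algebraMap_tmul_eq_one_tmul_smul R _ _ _ m S _ _ c _).symm
  · rw [hf, hf, hrT, one_mul]
    exact congrArg _ (@tmul_algebraMap_eq_smul_tmul_one R A _ _ rA S _ _ c a).symm
  · have hclosure := @closure_image2_tmul_eq_top R S _ _ _ _ _ m _
      (@closure_image2_tmul_eq_top R A S _ _ _ rA _ _ AddSubgroup.closure_univ)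
    rw [eq_top_iff, ← hclosure]
    refine AddSubgroup.closure_mono ?_
    rintro _ ⟨s, -, _, ⟨a, -, t, -, rfl⟩, rfl⟩
    exact ⟨s, a, t, by rw [hf, hrT, hlT, one_mul, mul_one]⟩

theorem isQuasiModule_base_change_of_flat_epi
    {R S A : Type*} [CommRing R] [CommRing S] [Algebra R S]
    [Module.Flat R S]
    (hepi : Function.Bijective (LinearMap.mul' R S))
    [AddCommGroup A] (lA rA : Module R A)
    (hA : ∀ (r s : R) (a : A), ModSMul lA r (ModSMul rA s a) = ModSMul rA s (ModSMul lA r a))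
    (hAq : IsQuasiModule lA rA)
    -- the left `R`-module structure on `A ⊗[R] S` induced by the left action on `A`:
    (m : Module R (@TensorProduct R _ A S _ _ rA _))
    (hm : ∀ (r : R) (a : A) (s : S),
      ModSMul m r (@TensorProduct.tmul R _ A S _ _ rA _ a s) =
        @TensorProduct.tmul R _ A S _ _ rA _ (ModSMul lA r a) s)
    -- the `S`-`S`-bimodule structure on `S ⊗[R] A ⊗[R] S`: the left action `lT` through the
    -- first tensor factor and the right action `rT` through the last tensor factor:
    (lT rT : Module S (@TensorProduct R _ S (@TensorProduct R _ A S _ _ rA _) _ _ _ m))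
    (hT : ∀ (s₁ s₂ : S) (x : @TensorProduct R _ S (@TensorProduct R _ A S _ _ rA _) _ _ _ m),
      ModSMul lT s₁ (ModSMul rT s₂ x) = ModSMul rT s₂ (ModSMul lT s₁ x))
    (hlT : ∀ (s' s : S) (x : @TensorProduct R _ A S _ _ rA _),
      ModSMul lT s' (@TensorProduct.tmul R _ S (@TensorProduct R _ A S _ _ rA _) _ _ _ m s x) =
        @TensorProduct.tmul R _ S (@TensorProduct R _ A S _ _ rA _) _ _ _ m (s' * s) x)
    (hrT : ∀ (s' s : S) (a : A) (t : S),
      ModSMul rT s' (@TensorProduct.tmul R _ S (@TensorProduct R _ A S _ _ rA _) _ _ _ m s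
          (@TensorProduct.tmul R _ A S _ _ rA _ a t)) =
        @TensorProduct.tmul R _ S (@TensorProduct R _ A S _ _ rA _) _ _ _ m s
          (@TensorProduct.tmul R _ A S _ _ rA _ a (t * s'))) :
    IsQuasiModule lT rT := by
  have : Algebra.IsEpi R S := ⟨hepi.1⟩
  exact isQuasiModule_base_change_of_flat_epi_general lA rA hAq m hm lT rT hT hlT hrT
end

section
/- Let σ : R → S be a flat epimorphism of commutative rings, let A be a quasi-module over R, let B be an S-S-bimodule, and let f : A → B be a morphism of R-R-bimodules, where B is regarded as an R-R-bimodule by restricting both actions along σ. Then the induced map S ⊗_R A → B, s ⊗ a ↦ s·f(a), is bijective if and only if the induced map A ⊗_R S → B, a ⊗ s ↦ f(a)·s, is bijective. -/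
/-!
The right action of `S` on `A ⊗[R] S` makes it an `S`-`R`-bimodule, `R` acting through the other
structure of `A`. The filtration of `A` induces one of `A ⊗[R] S` with subquotients on which
the two actions of `R` agree. These subquotients are `S`-modules with a single action, so tensoring
them with the epimorphism `R → S` once more changes nothing, and flatness lifts this to the whole
bimodule: `x ↦ x ⊗ 1` is a bijection from `A ⊗[R] S` to `(A ⊗[R] S) ⊗[R] S`. The same holds with
the two sides of `A` interchanged. Hence both induced maps are the composite of a bijection with
one and the same map `S ⊗[R] A ⊗[R] S → B`, `s ⊗ a ⊗ t ↦ s·f(a)·t`.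
-/

open TensorProduct

section ExtendScalars

variable {R S M B : Type*} [CommRing R] [CommRing S] [Algebra R S]
  [AddCommGroup M] [Module R M] [AddCommGroup B] [Module S B]

/-- The extension `m ⊗ s ↦ s • F m` to `M ⊗[R] S` of an additive map `F : M → B` into an
`S`-module which is semilinear along `R → S`. -/
def extendScalars (F : M →+ B) (hF : ∀ (r : R) (m : M), F (r • m) = algebraMap R S r • F m) :
    M ⊗[R] S →+ B :=
  liftAddHom ((smulAddHom S B).flip.comp F) fun r m s ↦
    show s • F (r • m) = (r • s) • F m by rw [hF, smul_smul, mul_comm, Algebra.smul_def]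

theorem extendScalars_tmul (F : M →+ B)
    (hF : ∀ (r : R) (m : M), F (r • m) = algebraMap R S r • F m) (m : M) (s : S) :
    extendScalars F hF (m ⊗ₜ s) = s • F m :=
  rfl

theorem bijective_extendScalars_iff
    (hM : Function.Bijective fun m : M ↦ m ⊗ₜ[R] (1 : S)) (F : M →+ B)
    (hF : ∀ (r : R) (m : M), F (r • m) = algebraMap R S r • F m) :
    Function.Bijective (extendScalars F hF) ↔ Function.Bijective F := by
  have factor : ⇑F = extendScalars F hF ∘ fun m ↦ m ⊗ₜ[R] (1 : S) := by
    ext m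
    simp [extendScalars_tmul]
  rw [factor, Function.Bijective.of_comp_iff _ hM]

end ExtendScalars

section Bimodule

variable {R R' S S' A B : Type*} [CommRing R] [CommRing R'] [CommRing S] [CommRing S']
  [Algebra R S] [Algebra R' S'] [AddCommGroup A] [Module R A] [Module R' A]
  [SMulCommClass R R' A]

theorem map_smul_of_map_tmul [AddCommGroup B] [Module S B] [Module S' B] [SMulCommClass S S' B]
    {f : A → B} (hf : ∀ (r : R') (a : A), f (r • a) = algebraMap R' S' r • f a)
    {F : A ⊗[R] S →+ B} (hF : ∀ a s, F (a ⊗ₜ s) = s • f a) (r : R') (x : A ⊗[R] S) :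
    F (r • x) = algebraMap R' S' r • F x := by
  induction x with
  | zero => simp
  | tmul a s => rw [smul_tmul', hF, hF, hf, smul_comm]
  | add x y hx hy => rw [smul_add, map_add, hx, hy, map_add, smul_add]

variable [SMulCommClass R' R A]

variable (R R' S S' A) in
/-- The exchange of the two outer factors of `(A ⊗[R] S) ⊗[R'] S'` for a bimodule `A`. It is
`TensorProduct.AlgebraTensorModule.rightComm` for `A` as a module over `R ⊗[ℤ] R'`. -/
noncomputable def bimoduleRightComm : (A ⊗[R] S) ⊗[R'] S' ≃+ (A ⊗[R'] S') ⊗[R] S :=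
  letI := Algebra.TensorProduct.rightAlgebra (R := ℤ) (A := R) (B := R')
  letI : Module (R ⊗[ℤ] R') A := TensorProduct.Algebra.module
  haveI := IsScalarTower.of_algebraMap_smul (R := R) (A := R ⊗[ℤ] R') (M := A) fun r a ↦
    (TensorProduct.Algebra.smul_def r (1 : R') a).trans (congrArg (r • ·) (one_smul R' a))
  haveI := IsScalarTower.of_algebraMap_smul (R := R') (A := R ⊗[ℤ] R') (M := A) fun r a ↦
    (TensorProduct.Algebra.smul_def (1 : R) r a).trans (one_smul R _)
  (AlgebraTensorModule.rightComm R' R (R ⊗[ℤ] R') A S S').toAddEquiv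

theorem bimoduleRightComm_tmul_tmul (a : A) (s : S) (t : S') :
    bimoduleRightComm R R' S S' A ((a ⊗ₜ s) ⊗ₜ t) = (a ⊗ₜ t) ⊗ₜ s :=
  rfl

theorem bijective_iff_bijective_of_bijective_tmul_one
    [AddCommGroup B] [Module S B] [Module S' B] [SMulCommClass S S' B]
    (hS : Function.Bijective fun x : A ⊗[R] S ↦ x ⊗ₜ[R'] (1 : S'))
    (hS' : Function.Bijective fun x : A ⊗[R'] S' ↦ x ⊗ₜ[R] (1 : S))
    {f : A → B} (hf : ∀ (r : R) (a : A), f (r • a) = algebraMap R S r • f a)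
    (hf' : ∀ (r : R') (a : A), f (r • a) = algebraMap R' S' r • f a)
    {F : A ⊗[R] S →+ B} (hF : ∀ a s, F (a ⊗ₜ s) = s • f a)
    {G : A ⊗[R'] S' →+ B} (hG : ∀ a s, G (a ⊗ₜ s) = s • f a) :
    Function.Bijective F ↔ Function.Bijective G := by
  have : SMulCommClass S' S B := .symm S S' B
  have hF_smul := map_smul_of_map_tmul hf' hF
  have hG_smul := map_smul_of_map_tmul hf hG
  have extensions_agree : extendScalars F hF_smul =
      (extendScalars G hG_smul).comp (bimoduleRightComm R R' S S' A).toAddMonoidHom := by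
    ext z
    induction z with
    | zero => simp
    | tmul x t =>
      induction x with
      | zero => simp
      | tmul a s =>
        simp [extendScalars_tmul, bimoduleRightComm_tmul_tmul, hF, hG, smul_comm s t]
      | add x y hx hy => rw [add_tmul, map_add, hx, hy, map_add]
    | add x y hx hy => rw [map_add, hx, hy, map_add]
  rw [← bijective_extendScalars_iff hS F hF_smul, ← bijective_extendScalars_iff hS' G hG_smul,
    extensions_agree, AddMonoidHom.coe_comp]
  exact Function.Bijective.of_comp_iff _ (bimoduleRightComm R R' S S' A).bijective

end Bimodule

section QuasiFiltration

variable (R S M : Type*) [CommRing R] [CommRing S] [Algebra R S]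
  [AddCommGroup M] [Module R M] [Module S M] [SMulCommClass R S M]

/-- The filtration of an `S`-`R`-bimodule by iterated commutators with the elements of `R`, indexed
so that `quasiFiltration R S M (n + 1)` is the term `Fₙ` and the zeroth term is `F₋₁ = 0`. -/
def quasiFiltration : ℕ → Submodule R M
  | 0 => ⊥
  | n + 1 => ⨅ r : R, (quasiFiltration n).comap
      (algebraMap R S r • LinearMap.id - r • LinearMap.id)

/-- An `S`-`R`-bimodule is quasi if its commutator filtration is exhaustive. For `S = R` these are
the quasi-modules over `R`. -/
def IsQuasiBimodule : Prop :=
  ∀ m : M, ∃ n, m ∈ quasiFiltration R S M n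

variable {R S M}

theorem mem_quasiFiltration_succ {n : ℕ} {m : M} :
    m ∈ quasiFiltration R S M (n + 1) ↔
      ∀ r : R, algebraMap R S r • m - r • m ∈ quasiFiltration R S M n := by
  simp [quasiFiltration]

theorem quasiFiltration_monotone : Monotone (quasiFiltration R S M) := by
  refine monotone_nat_of_le_succ fun n ↦ ?_
  induction n with
  | zero => exact bot_le
  | succ n ih =>
    intro m hm
    exact mem_quasiFiltration_succ.2 fun r ↦ ih (mem_quasiFiltration_succ.1 hm r)

theorem smul_mem_quasiFiltration {n : ℕ} (s : S) {m : M} (hm : m ∈ quasiFiltration R S M n) :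
    s • m ∈ quasiFiltration R S M n := by
  induction n generalizing m with
  | zero => rw [(Submodule.mem_bot R).1 hm, smul_zero]; exact zero_mem _
  | succ n ih =>
    refine mem_quasiFiltration_succ.2 fun r ↦ ?_
    rw [smul_comm _ s, smul_comm r s, ← smul_sub]
    exact ih (mem_quasiFiltration_succ.1 hm r)

theorem IsQuasiBimodule.of_exhaustive (Fil : ℕ → Set M)
    (zero : ∀ m ∈ Fil 0, ∀ r : R, algebraMap R S r • m - r • m = 0)
    (succ : ∀ n, ∀ m ∈ Fil (n + 1), ∀ r : R, algebraMap R S r • m - r • m ∈ Fil n)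
    (exhaustive : ∀ m, ∃ n, m ∈ Fil n) : IsQuasiBimodule R S M := by
  have subset (n : ℕ) : Fil n ⊆ quasiFiltration R S M (n + 1) := by
    induction n with
    | zero => exact fun m hm ↦ mem_quasiFiltration_succ.2 (zero m hm)
    | succ n ih => exact fun m hm ↦ mem_quasiFiltration_succ.2 fun r ↦ ih (succ n m hm r)
  intro m
  obtain ⟨n, hm⟩ := exhaustive m
  exact ⟨n + 1, subset n hm⟩

variable (R S M) in
/-- The action of `S` on `Fₙ / Fₙ₋₁`. It is bilinear over `R` because the two actions of `R`
agree on this quotient. -/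
def gradedSMul (n : ℕ) :
    quasiFiltration R S M (n + 1) →ₗ[R] S →ₗ[R] M ⧸ quasiFiltration R S M n :=
  LinearMap.mk₂ R (fun m s ↦ (quasiFiltration R S M n).mkQ (s • (m : M)))
    (fun m₁ m₂ s ↦ by simp)
    (fun r m s ↦ by rw [Submodule.coe_smul, ← smul_comm r s, map_smul])
    (fun m s t ↦ by rw [add_smul, map_add])
    (fun r m s ↦ by
      rw [← map_smul, ← sub_eq_zero, ← map_sub, Algebra.smul_def, mul_smul,
        Submodule.mkQ_apply, Submodule.Quotient.mk_eq_zero]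
      exact mem_quasiFiltration_succ.1 (smul_mem_quasiFiltration s m.2) r)

theorem gradedSMul_apply (n : ℕ) (m : quasiFiltration R S M (n + 1)) (s : S) :
    gradedSMul R S M n m s = (quasiFiltration R S M n).mkQ (s • (m : M)) :=
  rfl

theorem mem_quasiFiltration_of_tmul_one_eq_zero [Module.Flat R S] {n : ℕ} {m : M}
    (hm : m ∈ quasiFiltration R S M (n + 1)) (hm_one : m ⊗ₜ[R] (1 : S) = 0) :
    m ∈ quasiFiltration R S M n := by
  have tmul_one_eq_zero : (⟨m, hm⟩ : quasiFiltration R S M (n + 1)) ⊗ₜ[R] (1 : S) = 0 :=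
    Module.Flat.rTensor_preserves_injective_linearMap (M := S)
      (quasiFiltration R S M (n + 1)).subtype Subtype.val_injective (by simpa using hm_one)
  have image_eq_zero := congrArg (TensorProduct.lift (gradedSMul R S M n)) tmul_one_eq_zero
  simpa [gradedSMul_apply] using image_eq_zero

theorem tmul_sub_smul_tmul_one_mem_range [Algebra.IsEpi R S] {n : ℕ} {m : M}
    (hm : m ∈ quasiFiltration R S M (n + 1)) (s : S) :
    m ⊗ₜ[R] s - (s • m) ⊗ₜ[R] (1 : S) ∈
      LinearMap.range ((quasiFiltration R S M n).subtype.rTensor S) := by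
  have one_tmul_comm : (1 : S) ⊗ₜ[R] s = s ⊗ₜ[R] (1 : S) :=
    (Algebra.isEpi_iff_forall_one_tmul_eq R S).1 ‹_› s
  have image_eq := congrArg ((gradedSMul R S M n ⟨m, hm⟩).rTensor S) one_tmul_comm
  rw [← rTensor_mkQ, LinearMap.mem_ker, map_sub, sub_eq_zero]
  simpa [gradedSMul_apply] using image_eq

theorem tmul_mem_range_tmul_one [Algebra.IsEpi R S] {n : ℕ} {m : M}
    (hm : m ∈ quasiFiltration R S M n) (s : S) :
    m ⊗ₜ[R] s ∈ LinearMap.range ((TensorProduct.mk R M S).flip 1) := by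
  induction n generalizing m s with
  | zero => rw [(Submodule.mem_bot R).1 hm, zero_tmul]; exact zero_mem _
  | succ n ih =>
    have range_le : LinearMap.range ((quasiFiltration R S M n).subtype.rTensor S) ≤
        LinearMap.range ((TensorProduct.mk R M S).flip 1) := by
      rintro _ ⟨y, rfl⟩
      induction y with
      | zero => simp
      | tmul y t => exact ih y.2 t
      | add y z hy hz => rw [map_add]; exact add_mem hy hz
    rw [← sub_add_cancel (m ⊗ₜ[R] s) ((s • m) ⊗ₜ 1)]
    exact add_mem (range_le (tmul_sub_smul_tmul_one_mem_range hm s)) ⟨s • m, rfl⟩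

theorem IsQuasiBimodule.bijective_tmul_one [Module.Flat R S] [Algebra.IsEpi R S]
    (h : IsQuasiBimodule R S M) : Function.Bijective fun m : M ↦ m ⊗ₜ[R] (1 : S) := by
  have eq_zero {n : ℕ} {m : M} (hm : m ∈ quasiFiltration R S M n)
      (hm_one : m ⊗ₜ[R] (1 : S) = 0) : m = 0 := by
    induction n with
    | zero => exact (Submodule.mem_bot R).1 hm
    | succ n ih => exact ih (mem_quasiFiltration_of_tmul_one_eq_zero hm hm_one)
  change Function.Bijective ((TensorProduct.mk R M S).flip 1)
  refine ⟨(injective_iff_map_eq_zero _).2 fun m hm_one ↦ ?_, fun z ↦ ?_⟩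
  · obtain ⟨n, hm⟩ := h m
    exact eq_zero hm hm_one
  · rw [← LinearMap.mem_range]
    induction z with
    | zero => exact zero_mem _
    | tmul m s =>
      obtain ⟨n, hm⟩ := h m
      exact tmul_mem_range_tmul_one hm s
    | add x y hx hy => exact add_mem hx hy

end QuasiFiltration

section TensorProduct

variable {K R S A : Type*} [CommRing K] [CommRing R] [CommRing S] [Algebra R S]
  [AddCommGroup A] [Module K A] [Module R A]

/-- The `S`-module structure on `A ⊗[R] S` by multiplication on the right-hand factor. -/
noncomputable abbrev tensorRightModule : Module S (A ⊗[R] S) :=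
  Module.compHom _ ((Module.End.lTensorAlgHom R S A).comp (Algebra.lmul R S)).toRingHom

attribute [local instance] tensorRightModule

theorem smul_tmul_right (s t : S) (a : A) : s • (a ⊗ₜ[R] t) = a ⊗ₜ[R] (s * t) :=
  rfl

variable [SMulCommClass R K A]

theorem smulCommClass_tensorRightModule : SMulCommClass K S (A ⊗[R] S) where
  smul_comm k s x := by
    induction x with
    | zero => simp
    | tmul a t => simp only [smul_tmul', smul_tmul_right]
    | add x y hx hy => simp only [smul_add, hx, hy]

attribute [local instance] smulCommClass_tensorRightModule

variable [Algebra K R] [Algebra K S] [IsScalarTower K R S] [SMulCommClass K R A]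

theorem tmul_mem_quasiFiltration {n : ℕ} {a : A}
    (ha : a ∈ quasiFiltration K R A n) (t : S) :
    a ⊗ₜ t ∈ quasiFiltration K S (A ⊗[R] S) n := by
  induction n generalizing a with
  | zero => rw [(Submodule.mem_bot K).1 ha, zero_tmul]; exact zero_mem _
  | succ n ih =>
    refine mem_quasiFiltration_succ.2 fun k ↦ ?_
    have commutator_tmul : algebraMap K S k • (a ⊗ₜ[R] t) - k • (a ⊗ₜ[R] t) =
        (algebraMap K R k • a - k • a) ⊗ₜ t := by
      rw [smul_tmul_right, sub_tmul, smul_tmul', smul_tmul (algebraMap K R k), Algebra.smul_def,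
        ← IsScalarTower.algebraMap_apply K R S]
    rw [commutator_tmul]
    exact ih (mem_quasiFiltration_succ.1 ha k)

theorem IsQuasiBimodule.tensorProduct (h : IsQuasiBimodule K R A) :
    IsQuasiBimodule K S (A ⊗[R] S) := by
  intro x
  induction x with
  | zero => exact ⟨0, zero_mem _⟩
  | tmul a t =>
    obtain ⟨n, ha⟩ := h a
    exact ⟨n, tmul_mem_quasiFiltration ha t⟩
  | add x y hx hy =>
    obtain ⟨m, hx⟩ := hx
    obtain ⟨n, hy⟩ := hy
    exact ⟨max m n, add_mem (quasiFiltration_monotone (le_max_left m n) hx)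
      (quasiFiltration_monotone (le_max_right m n) hy)⟩

theorem IsQuasiBimodule.bijective_tensorProduct_tmul_one [Module.Flat K S]
    [Algebra.IsEpi K S] (h : IsQuasiBimodule K R A) :
    Function.Bijective fun x : A ⊗[R] S ↦ x ⊗ₜ[K] (1 : S) :=
  h.tensorProduct.bijective_tmul_one

end TensorProduct

section IsQuasiModule

variable {R A : Type*} [CommRing R] [AddCommGroup A] {l r : Module R A}

theorem modSMul_neg (m : Module R A) (s : R) (a : A) : ModSMul m s (-a) = -ModSMul m s a :=
  smul_neg s a

theorem neg_mem_quasiFil {n : ℕ} {a : A} (ha : a ∈ quasiFil l r n) : -a ∈ quasiFil l r n := by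
  induction n generalizing a with
  | zero =>
    intro s
    rw [modSMul_neg, modSMul_neg, ← neg_sub', ha s, neg_zero]
  | succ n ih =>
    intro s
    rw [modSMul_neg, modSMul_neg, ← neg_sub']
    exact ih (ha s)

theorem mem_quasiFil_swap {n : ℕ} {a : A} (ha : a ∈ quasiFil l r n) : a ∈ quasiFil r l n := by
  induction n generalizing a with
  | zero =>
    intro s
    rw [← neg_sub, ha s, neg_zero]
  | succ n ih =>
    intro s
    rw [← neg_sub]
    exact neg_mem_quasiFil (ih (ha s))

theorem IsQuasiModule.symm (h : IsQuasiModule l r) : IsQuasiModule r l := fun a ↦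
  (h a).imp fun _ ha ↦ mem_quasiFil_swap ha

theorem IsQuasiModule.isQuasiBimodule (h : IsQuasiModule l r)
    (comm : @SMulCommClass R R A r.toSMul l.toSMul) : @IsQuasiBimodule R R A _ _ _ _ r l comm :=
  @IsQuasiBimodule.of_exhaustive R R A _ _ _ _ r l comm (quasiFil l r)
    (fun _ ha ↦ ha) (fun _ _ ha ↦ ha) h

end IsQuasiModule

theorem bijective_left_iff_bijective_right_of_flat_epi
    {R S A B : Type*} [CommRing R] [CommRing S] [Algebra R S]
    [Module.Flat R S]
    (hepi : Function.Bijective (LinearMap.mul' R S))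
    [AddCommGroup A] (lA rA : Module R A)
    (hA : ∀ (r s : R) (a : A), ModSMul lA r (ModSMul rA s a) = ModSMul rA s (ModSMul lA r a))
    (hAq : IsQuasiModule lA rA)
    [AddCommGroup B] (lB rB : Module S B)
    (hB : ∀ (s t : S) (b : B), ModSMul lB s (ModSMul rB t b) = ModSMul rB t (ModSMul lB s b))
    -- `f : A → B` is a morphism of `R`-`R`-bimodules, where `B` is regarded as an
    -- `R`-`R`-bimodule by restricting both actions along `algebraMap R S`:
    (f : A →+ B)
    (hfl : ∀ (r : R) (a : A), f (ModSMul lA r a) = ModSMul lB (algebraMap R S r) (f a))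
    (hfr : ∀ (r : R) (a : A), f (ModSMul rA r a) = ModSMul rB (algebraMap R S r) (f a))
    -- the induced map `S ⊗[R] A → B`, `s ⊗ a ↦ s · f a`:
    (F : (@TensorProduct R _ S A _ _ _ lA) →+ B)
    (hF : ∀ (s : S) (a : A),
      F (@TensorProduct.tmul R _ S A _ _ _ lA s a) = ModSMul lB s (f a))
    -- the induced map `A ⊗[R] S → B`, `a ⊗ s ↦ f a · s`:
    (G : (@TensorProduct R _ A S _ _ rA _) →+ B)
    (hG : ∀ (a : A) (s : S),
      G (@TensorProduct.tmul R _ A S _ _ rA _ a s) = ModSMul rB s (f a)) :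
    Function.Bijective F ↔ Function.Bijective G := by
  have : Algebra.IsEpi R S := ⟨hepi.injective⟩
  have commA := @SMulCommClass.mk R R A lA.toSMul rA.toSMul hA
  have commA' := @SMulCommClass.symm R R A lA.toSMul rA.toSMul commA
  have commB := @SMulCommClass.mk S S B lB.toSMul rB.toSMul hB
  have bijective_left := @IsQuasiBimodule.bijective_tensorProduct_tmul_one
    R R S A _ _ _ _ _ rA lA commA _ _ _ commA' _ _ (hAq.isQuasiBimodule commA')
  have bijective_right := @IsQuasiBimodule.bijective_tensorProduct_tmul_one
    R R S A _ _ _ _ _ lA rA commA' _ _ _ commA _ _ (hAq.symm.isQuasiBimodule commA)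
  let swap := @TensorProduct.comm R _ A S _ _ lA _
  rw [← Function.Bijective.of_comp_iff F swap.bijective]
  exact @bijective_iff_bijective_of_bijective_tmul_one
    R R S S A B _ _ _ _ _ _ _ lA rA commA commA' _ lB rB commB bijective_left bijective_right
    f hfl hfr (F.comp (AddMonoidHomClass.toAddMonoidHom swap)) (fun a s ↦ hF s a) G hG
end

section
/- Let A be an additive category in which every morphism has a kernel and a cokernel, let B be an abelian category, and let Θ : A → B be an additive functor that is conservative (reflects isomorphisms) and preserves kernels and cokernels. Then A is an abelian category. -/
/-!
STATEMENT 4.  Let `A` be an additive category (a preadditive category with finite biproducts)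
in which every morphism has a kernel and a cokernel, let `B` be an abelian category, and let
`Θ : A ⥤ B` be an additive functor that is conservative and preserves kernels and cokernels.
Then `A` is an abelian category (with its given additive structure).
-/

open CategoryTheory Limits

section CoimageImageComparison

variable {C D : Type*} [Category C] [Category D] [HasZeroMorphisms C] [HasZeroMorphisms D]
  (F : C ⥤ D) [F.PreservesZeroMorphisms] {X Y : C} (f : X ⟶ Y)
  [HasKernel f] [HasCokernel f] [HasKernel (cokernel.π f)] [HasCokernel (kernel.ι f)]
  [PreservesLimit (parallelPair f 0) F] [PreservesColimit (parallelPair f 0) F]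
  [PreservesLimit (parallelPair (cokernel.π f) 0) F]
  [PreservesColimit (parallelPair (kernel.ι f) 0) F]
  [HasKernel (cokernel.π (F.map f))] [HasCokernel (kernel.ι (F.map f))]

theorem isIso_map_coimageImageComparison_iff :
    IsIso (F.map (Abelian.coimageImageComparison f)) ↔
      IsIso (Abelian.coimageImageComparison (F.map f)) :=
  Arrow.isIso_iff_isIso_of_isIso (Abelian.PreservesCoimageImageComparison.iso F f).hom

theorem isIso_coimageImageComparison_of_map
    [F.ReflectsIsomorphisms] [IsIso (Abelian.coimageImageComparison (F.map f))] :
    IsIso (Abelian.coimageImageComparison f) :=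
  have : IsIso (F.map (Abelian.coimageImageComparison f)) :=
    (isIso_map_coimageImageComparison_iff F f).mpr inferInstance
  isIso_of_reflects_iso _ F

end CoimageImageComparison

theorem abelian_of_conservative_exact_functor_general
    {A : Type*} {B : Type*} [Category A] [Category B]
    [instA : Preadditive A] [HasFiniteBiproducts A] [HasKernels A] [HasCokernels A]
    [HasZeroMorphisms B] [HasKernels B] [HasCokernels B]
    (Θ : A ⥤ B) [Θ.PreservesZeroMorphisms] [Θ.ReflectsIsomorphisms]
    [∀ {X Y : A} (f : X ⟶ Y), PreservesLimit (parallelPair f 0) Θ]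
    [∀ {X Y : A} (f : X ⟶ Y), PreservesColimit (parallelPair f 0) Θ]
    [∀ {X Y : A} (f : X ⟶ Y), IsIso (Abelian.coimageImageComparison (Θ.map f))] :
    ∃ ab : Abelian A, ab.toPreadditive = instA :=
  have {X Y : A} (f : X ⟶ Y) : IsIso (Abelian.coimageImageComparison f) :=
    isIso_coimageImageComparison_of_map Θ f
  ⟨Abelian.ofCoimageImageComparisonIsIso, rfl⟩

theorem abelian_of_conservative_exact_functor
    {A : Type*} {B : Type*} [Category A] [Category B]
    [instA : Preadditive A] [HasFiniteBiproducts A] [HasKernels A] [HasCokernels A]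
    [Abelian B]
    (Θ : A ⥤ B) [Θ.Additive] [Θ.ReflectsIsomorphisms]
    (hker : ∀ {X Y : A} (f : X ⟶ Y), PreservesLimit (parallelPair f 0) Θ)
    (hcoker : ∀ {X Y : A} (f : X ⟶ Y), PreservesColimit (parallelPair f 0) Θ) :
    ∃ ab : Abelian A, ab.toPreadditive = instA := by
  exact abelian_of_conservative_exact_functor_general Θ
end

section
/- Let 𝒜 be an abelian category and T : 𝒜 → 𝒜 an additive auto-equivalence. Suppose given morphisms f : A → B and g : B → C in 𝒜, short exact sequences 0 → T(A) → X → A → 0, 0 → T(B) → Y → B → 0 and 0 → T(C) → Z → C → 0, and morphisms X → Y and Y → Z such that 0 → X → Y → Z → 0 is a short exact sequence and the resulting three-by-three diagram commutes, where the top row consists of T(f) : T(A) → T(B) and T(g) : T(B) → T(C) and the bottom row consists of f and g. Then 0 → A → B → C → 0 is a short exact sequence (and hence so is 0 → T(A) → T(B) → T(C) → 0). -/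
/-!
STATEMENT 5.  Let `𝒜` be an abelian category and `T : 𝒜 ⥤ 𝒜` an additive auto-equivalence.
Given `f : A ⟶ B`, `g : B ⟶ C`, short exact sequences `0 → T(A) → X → A → 0`,
`0 → T(B) → Y → B → 0`, `0 → T(C) → Z → C → 0`, and morphisms `X ⟶ Y`, `Y ⟶ Z` such that
`0 → X → Y → Z → 0` is a short exact sequence and the resulting three-by-three diagram
(with top row `T(f)`, `T(g)` and bottom row `f`, `g`) commutes, then `0 → A → B → C → 0`
is a short exact sequence (and hence so is `0 → T(A) → T(B) → T(C) → 0`).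
-/

open CategoryTheory Limits

section

variable {𝒜 : Type*} [Category 𝒜]

theorem exact_epi_comp [HasZeroMorphisms 𝒜] {K L M N : 𝒜} (q : K ⟶ L) [Epi q]
    {i : L ⟶ M} {p : M ⟶ N} {w : i ≫ p = 0} (h : (ShortComplex.mk i p w).Exact) :
    (ShortComplex.mk (q ≫ i) p (by rw [Category.assoc, w, comp_zero])).Exact := by
  let φ : ShortComplex.mk (q ≫ i) p (by rw [Category.assoc, w, comp_zero]) ⟶
      ShortComplex.mk i p w :=
    { τ₁ := q, τ₂ := 𝟙 M, τ₃ := 𝟙 N }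
  have : Epi φ.τ₁ := ‹Epi q›
  have : IsIso φ.τ₂ := inferInstanceAs (IsIso (𝟙 M))
  have : Mono φ.τ₃ := inferInstanceAs (Mono (𝟙 N))
  exact (ShortComplex.exact_iff_of_epi_of_isIso_of_mono φ).mpr h

variable [Abelian 𝒜]

/-- Lift an element of `ker S₂.g` along `φ.τ₂`; subtracting an element of `K` moves the lift into
`ker S₁.g` without changing its image in `S₂.X₂`. -/
theorem exact_target_of_exact_source_of_epi {S₁ S₂ : ShortComplex 𝒜} (φ : S₁ ⟶ S₂) [Epi φ.τ₂]
    (hS₁ : S₁.Exact) {K : 𝒜} {k : K ⟶ S₁.X₂} (hk : k ≫ φ.τ₂ = 0) {w : (k ≫ S₁.g) ≫ φ.τ₃ = 0}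
    (hK : (ShortComplex.mk (k ≫ S₁.g) φ.τ₃ w).Exact) :
    S₂.Exact := by
  rw [ShortComplex.exact_iff_exact_up_to_refinements]
  intro P b hb
  obtain ⟨P₁, π₁, _, y, hy⟩ := surjective_up_to_refinements_of_epi φ.τ₂ b
  have hyg : (y ≫ S₁.g) ≫ φ.τ₃ = 0 := by
    rw [Category.assoc, ← φ.comm₂₃, ← reassoc_of% hy, hb, comp_zero]
  obtain ⟨P₂, π₂, _, z, hz⟩ := hK.exact_up_to_refinements (y ≫ S₁.g) hyg
  have hcorrected : (π₂ ≫ y - z ≫ k) ≫ S₁.g = 0 := by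
    rw [Preadditive.sub_comp, Category.assoc, Category.assoc, sub_eq_zero]
    exact hz
  obtain ⟨P₃, π₃, _, x, hx⟩ := hS₁.exact_up_to_refinements _ hcorrected
  refine ⟨P₃, π₃ ≫ π₂ ≫ π₁, inferInstance, x ≫ φ.τ₁, ?_⟩
  calc (π₃ ≫ π₂ ≫ π₁) ≫ b
      = π₃ ≫ (π₂ ≫ y - z ≫ k) ≫ φ.τ₂ := by
        simp only [Category.assoc, Preadditive.sub_comp, hk, comp_zero, sub_zero, hy]
    _ = (x ≫ φ.τ₁) ≫ S₂.f := by rw [reassoc_of% hx, Category.assoc, φ.comm₁₂]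

/-- Unlike in the nine lemma, neither outer row is known to be exact. Instead `T` relates them:
the upper left square makes `T.map f` mono, hence `f` mono, and the lower right square makes `g`
epi, hence `T.map g` epi, which is what the diagram chase for exactness at `B` needs. -/
theorem shortExact_of_three_by_three_general
    (T : 𝒜 ⥤ 𝒜) [T.Faithful] [PreservesFiniteLimits T] [PreservesFiniteColimits T]
    {A B C X Y Z : 𝒜} {f : A ⟶ B} {g : B ⟶ C}
    {iA : T.obj A ⟶ X} {pA : X ⟶ A} (hiA : Mono iA) (hpA : Epi pA)
    {iB : T.obj B ⟶ Y} {pB : Y ⟶ B} (hpB : Epi pB) (wB : iB ≫ pB = 0)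
    {iC : T.obj C ⟶ Z} {pC : Z ⟶ C} {wC : iC ≫ pC = 0}
    (hC : (ShortComplex.mk iC pC wC).Exact) (hpC : Epi pC)
    {u : X ⟶ Y} {v : Y ⟶ Z} {wM : u ≫ v = 0} (hM : (ShortComplex.mk u v wM).ShortExact)
    (sq₁ : T.map f ≫ iB = iA ≫ u) (sq₂ : T.map g ≫ iC = iB ≫ v)
    (sq₃ : pA ≫ f = u ≫ pB) (sq₄ : pB ≫ g = v ≫ pC) :
    (∃ w : f ≫ g = 0, (ShortComplex.mk f g w).ShortExact) ∧
      (∃ w' : T.map f ≫ T.map g = 0,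
        (ShortComplex.mk (T.map f) (T.map g) w').ShortExact) := by
  have : Mono u := hM.mono_f
  have : Epi v := hM.epi_g
  have w : f ≫ g = 0 := by
    rw [← cancel_epi pA, reassoc_of% sq₃, sq₄, reassoc_of% wM, zero_comp, comp_zero]
  have hf : Mono f := T.mono_of_mono_map (mono_of_mono_fac sq₁)
  have hg : Epi g := epi_of_epi_fac sq₄
  let φ : ShortComplex.mk u v wM ⟶ ShortComplex.mk f g w :=
    { τ₁ := pA, τ₂ := pB, τ₃ := pC, comm₁₂ := sq₃, comm₂₃ := sq₄ }
  have : Epi φ.τ₂ := hpB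
  have hK : (ShortComplex.mk (iB ≫ v) pC (by rw [← sq₂, Category.assoc, wC, comp_zero])).Exact := by
    simpa only [sq₂] using exact_epi_comp (T.map g) hC
  have hrow : (ShortComplex.mk f g w).ShortExact :=
    { exact := exact_target_of_exact_source_of_epi φ hM.exact wB hK, mono_f := hf, epi_g := hg }
  exact ⟨⟨w, hrow⟩, _, hrow.map_of_exact T⟩

end

theorem shortExact_of_three_by_three
    {𝒜 : Type*} [Category 𝒜] [Abelian 𝒜]
    (T : 𝒜 ⥤ 𝒜) [T.Additive] [T.IsEquivalence]
    {A B C X Y Z : 𝒜} (f : A ⟶ B) (g : B ⟶ C)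
    (iA : T.obj A ⟶ X) (pA : X ⟶ A) (wA : iA ≫ pA = 0)
    (hA : (ShortComplex.mk iA pA wA).ShortExact)
    (iB : T.obj B ⟶ Y) (pB : Y ⟶ B) (wB : iB ≫ pB = 0)
    (hB : (ShortComplex.mk iB pB wB).ShortExact)
    (iC : T.obj C ⟶ Z) (pC : Z ⟶ C) (wC : iC ≫ pC = 0)
    (hC : (ShortComplex.mk iC pC wC).ShortExact)
    (u : X ⟶ Y) (v : Y ⟶ Z) (wM : u ≫ v = 0)
    (hM : (ShortComplex.mk u v wM).ShortExact)
    (sq₁ : T.map f ≫ iB = iA ≫ u) (sq₂ : T.map g ≫ iC = iB ≫ v)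
    (sq₃ : pA ≫ f = u ≫ pB) (sq₄ : pB ≫ g = v ≫ pC) :
    (∃ w : f ≫ g = 0, (ShortComplex.mk f g w).ShortExact) ∧
      (∃ w' : T.map f ≫ T.map g = 0,
        (ShortComplex.mk (T.map f) (T.map g) w').ShortExact) := by
  exact shortExact_of_three_by_three_general T hA.mono_f hA.epi_g hB.epi_g wB hC.exact hC.epi_g
    hM sq₁ sq₂ sq₃ sq₄
end

section
/- Let 𝒜 be an abelian category with all set-indexed products and enough projective objects. Then products of short exact sequences in 𝒜 are exact: for every family of short exact sequences 0 → X_i → Y_i → Z_i → 0 in 𝒜 indexed by a set, the product sequence 0 → ∏ X_i → ∏ Y_i → ∏ Z_i → 0 is a short exact sequence. -/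
/-!
STATEMENT 6.  Let `𝒜` be an abelian category with all set-indexed products and enough
projective objects.  Then products of short exact sequences in `𝒜` are exact: for every
family of short exact sequences `0 → Xᵢ → Yᵢ → Zᵢ → 0` indexed by a set `I`, the product
sequence `0 → ∏ Xᵢ → ∏ Yᵢ → ∏ Zᵢ → 0` is a short exact sequence.
-/

open CategoryTheory Limits

universe w v u

section ProjectiveLift

variable {C : Type*} [Category* C] {I : Type*} {Y Z : I → C} [HasProduct Y] [HasProduct Z]
  (g : ∀ i, Y i ⟶ Z i) [∀ i, Epi (g i)] {P : C} [Projective P] (p : P ⟶ ∏ᶜ Z)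

lemma exists_comp_piMap_eq_of_projective : ∃ q : P ⟶ ∏ᶜ Y, q ≫ Limits.Pi.map g = p := by
  refine ⟨Pi.lift fun i => Projective.factorThru (p ≫ Pi.π Z i) (g i), ?_⟩
  ext i
  simp

lemma epi_piMap_of_epi_of_projective [Epi p] : Epi (Limits.Pi.map g) := by
  obtain ⟨q, hq⟩ := exists_comp_piMap_eq_of_projective g p
  exact epi_of_epi_fac hq

end ProjectiveLift

section Kernel

variable {C : Type*} [Category* C] [HasZeroMorphisms C] {I : Type*} {X Y Z : I → C}
  [HasProduct X] [HasProduct Y] [HasProduct Z] {f : ∀ i, X i ⟶ Y i} {g : ∀ i, Y i ⟶ Z i}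

lemma piMap_comp_piMap_eq_zero (w₀ : ∀ i, f i ≫ g i = 0) :
    Limits.Pi.map f ≫ Limits.Pi.map g = 0 := by
  ext i
  simp [w₀]

lemma comp_π_comp_eq_zero_of_comp_piMap_eq_zero {T : C} {k : T ⟶ ∏ᶜ Y}
    (hk : k ≫ Limits.Pi.map g = 0) (i : I) : (k ≫ Pi.π Y i) ≫ g i = 0 := by
  rw [Category.assoc, ← Pi.map_π, reassoc_of% hk, zero_comp]

/-- A product of kernels is a kernel of the product morphism: if every `f i` is a kernel of `g i`,
then `Pi.map f` is a kernel of `Pi.map g`. It is stated as data, like the other universal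
properties of kernel forks. -/
noncomputable def isLimitKernelForkPiMap {w₀ : ∀ i, f i ≫ g i = 0}
    (hf : ∀ i, IsLimit (KernelFork.ofι (f i) (w₀ i))) :
    IsLimit (KernelFork.ofι (Limits.Pi.map f) (piMap_comp_piMap_eq_zero w₀)) :=
  have (i : I) : Mono (f i) := mono_of_isLimit_fork (hf i)
  KernelFork.IsLimit.ofι' _ _ fun k hk =>
    let componentLift (i : I) := KernelFork.IsLimit.lift' (hf i) (k ≫ Pi.π Y i)
      (comp_π_comp_eq_zero_of_comp_piMap_eq_zero hk i)
    ⟨Pi.lift fun i => (componentLift i).1, by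
      ext i
      simpa using (componentLift i).2⟩

end Kernel

theorem product_shortExact_of_enoughProjectives_general
    {𝒜 : Type*} [Category* 𝒜] [Preadditive 𝒜] [Balanced 𝒜] [CategoryWithHomology 𝒜]
    {I : Type*} {X Y Z : I → 𝒜} [HasProduct X] [HasProduct Y] [HasProduct Z]
    {f : ∀ i, X i ⟶ Y i} {g : ∀ i, Y i ⟶ Z i} {w₀ : ∀ i, f i ≫ g i = 0}
    (h : ∀ i, (ShortComplex.mk (f i) (g i) (w₀ i)).ShortExact)
    {P : 𝒜} [Projective P] (p : P ⟶ ∏ᶜ Z) [Epi p] :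
    (ShortComplex.mk (Limits.Pi.map f) (Limits.Pi.map g)
      (piMap_comp_piMap_eq_zero w₀)).ShortExact := by
  have (i : I) : Mono (f i) := (h i).mono_f
  have (i : I) : Epi (g i) := (h i).epi_g
  exact
    { exact := ShortComplex.exact_of_f_is_kernel _
        (isLimitKernelForkPiMap fun i => (h i).fIsKernel)
      mono_f := Pi.map_mono f
      epi_g := epi_piMap_of_epi_of_projective g p }

theorem product_shortExact_of_enoughProjectives
    {𝒜 : Type u} [Category.{v} 𝒜] [Abelian 𝒜]
    [HasProducts.{w} 𝒜] [EnoughProjectives 𝒜]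
    {I : Type w} (X Y Z : I → 𝒜)
    (f : ∀ i, X i ⟶ Y i) (g : ∀ i, Y i ⟶ Z i)
    (w₀ : ∀ i, f i ≫ g i = 0)
    (h : ∀ i, (ShortComplex.mk (f i) (g i) (w₀ i)).ShortExact) :
    ∃ w' : Limits.Pi.map f ≫ Limits.Pi.map g = 0,
      (ShortComplex.mk (Limits.Pi.map f) (Limits.Pi.map g) w').ShortExact :=
  ⟨piMap_comp_piMap_eq_zero w₀,
    product_shortExact_of_enoughProjectives_general h (Projective.π (∏ᶜ Z))⟩
end

section
/- Let 𝒜 be an abelian category and let 0 → A → B → C → 0 be a short exact sequence of cochain complexes over 𝒜, given by chain maps f : A → B and g : B → C such that 0 → Aⁿ → Bⁿ → Cⁿ → 0 is exact in 𝒜 for every n. Let φ : Cone(f) → C be the chain map induced by g (well defined since g∘f = 0), so that Cone(φ) is, up to shift, the totalization of the three-term complex of complexes A → B → C. If J is a cochain complex over 𝒜 all of whose components Jⁿ are injective objects of 𝒜, then every chain map Cone(φ) → J is homotopic to zero. -/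
/-!
STATEMENT 7.  Let `𝒜` be an abelian category and let `0 → A → B → C → 0` be a short exact
sequence of cochain complexes over `𝒜` (given by chain maps `f : A ⟶ B`, `g : B ⟶ C` which
are degreewise short exact).  Let `φ : Cone(f) ⟶ C` be the chain map induced by `g`
(characterized by `inr f ≫ φ = g` and the vanishing of its component along `inl f`), so
that `Cone(φ)` is, up to shift, the totalization of the three-term complex of complexes
`A → B → C`.  If `J` is a cochain complex all of whose components are injective objects
of `𝒜`, then every chain map `Cone(φ) ⟶ J` is homotopic to zero.
-/

open CategoryTheory Limits CochainComplex CochainComplex.HomComplex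

/-!
Termwise injectivity of `J` makes `0 → Hom(C, J) → Hom(B, J) → Hom(A, J) → 0` a degreewise exact
sequence of complexes of abelian groups. A chain map `Cone(φ) ⟶ J` consists of a cochain `U` on
`Cone(f)` and a chain map `v : C ⟶ J` with `δ U = φ^* v`. Surjectivity of `f^*` lets us subtract
a coboundary from `U` so that its component on `A` vanishes; exactness in the middle then writes
the remainder as `φ^* γ`, and injectivity of `g^*` forces `v = δ γ`.
-/

section LeftComp

variable {𝒜 : Type*} [Category 𝒜] [Preadditive 𝒜]

lemma leftComp_injective_of_epi {X Y : 𝒜} (g : X ⟶ Y) [Epi g] (Z : 𝒜) :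
    Function.Injective (Preadditive.leftComp Z g) :=
  fun _ _ h ↦ (cancel_epi g).1 h

lemma leftComp_surjective_of_mono {X Y : 𝒜} (f : X ⟶ Y) [Mono f] (Z : 𝒜) [Injective Z] :
    Function.Surjective (Preadditive.leftComp Z f) :=
  fun k ↦ Injective.factors k f

lemma leftComp_exact_of_exact [Balanced 𝒜] {S : ShortComplex 𝒜} (hS : S.Exact) [Epi S.g] (Z : 𝒜) :
    Function.Exact (Preadditive.leftComp Z S.g) (Preadditive.leftComp Z S.f) := by
  intro k
  constructor
  · exact fun hk ↦ ⟨hS.desc k hk, hS.g_desc k hk⟩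
  · rintro ⟨l, rfl⟩
    exact (S.zero_assoc l).trans zero_comp

end LeftComp

section Precomposition

variable {𝒜 : Type*} [Category 𝒜] [Preadditive 𝒜] {F G K J : CochainComplex 𝒜 ℤ}

/-- The map `f^*` from cochains `G → J` to cochains `F → J` of degree `n` given by precomposition
with a chain map `f : F ⟶ G`. -/
def cochainPrecomp (f : F ⟶ G) (J : CochainComplex 𝒜 ℤ) (n : ℤ) :
    Cochain G J n →+ Cochain F J n :=
  AddMonoidHom.mk' (fun z ↦ (Cochain.ofHom f).comp z (zero_add n)) fun _ _ ↦
    Cochain.comp_add _ _ _ _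

lemma cochainPrecomp_apply (f : F ⟶ G) {n : ℤ} (z : Cochain G J n) :
    cochainPrecomp f J n z = (Cochain.ofHom f).comp z (zero_add n) := rfl

lemma cochainPrecomp_v (f : F ⟶ G) {n : ℤ} (z : Cochain G J n) (p q : ℤ) (hpq : p + n = q) :
    (cochainPrecomp f J n z).v p q hpq = f.f p ≫ z.v p q hpq := by
  simp [cochainPrecomp_apply]

lemma cochainPrecomp_comp (f : F ⟶ G) (g : G ⟶ K) {n : ℤ} (z : Cochain K J n) :
    cochainPrecomp (f ≫ g) J n z = cochainPrecomp f J n (cochainPrecomp g J n z) := by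
  simp [cochainPrecomp_apply]

lemma δ_cochainPrecomp (f : F ⟶ G) {n : ℤ} (z : Cochain G J n) (m : ℤ) :
    δ n m (cochainPrecomp f J n z) = cochainPrecomp f J m (δ n m z) :=
  δ_ofHom_comp f z m

lemma cochainPrecomp_injective {f : F ⟶ G}
    (hf : ∀ p q, Function.Injective (Preadditive.leftComp (J.X q) (f.f p))) (n : ℤ) :
    Function.Injective (cochainPrecomp f J n) := by
  intro z₁ z₂ h
  ext p q hpq
  have hv := Cochain.congr_v h p q hpq
  rw [cochainPrecomp_v, cochainPrecomp_v] at hv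
  exact hf p q hv

lemma cochainPrecomp_surjective {f : F ⟶ G}
    (hf : ∀ p q, Function.Surjective (Preadditive.leftComp (J.X q) (f.f p))) (n : ℤ) :
    Function.Surjective (cochainPrecomp f J n) := by
  intro z
  choose k hk using fun p q ↦ hf p q
  refine ⟨Cochain.mk fun p q hpq ↦ k p q (z.v p q hpq), ?_⟩
  ext p q hpq
  rw [cochainPrecomp_v, Cochain.mk_v]
  exact hk p q _

lemma cochainPrecomp_exact {f : F ⟶ G} {g : G ⟶ K}
    (h : ∀ p q, Function.Exact (Preadditive.leftComp (J.X q) (g.f p))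
      (Preadditive.leftComp (J.X q) (f.f p))) (n : ℤ) :
    Function.Exact (cochainPrecomp g J n) (cochainPrecomp f J n) := by
  intro z
  constructor
  · intro hz
    have hv (p q : ℤ) (hpq : p + n = q) : ∃ k : K.X p ⟶ J.X q, g.f p ≫ k = z.v p q hpq := by
      have hzv := Cochain.congr_v hz p q hpq
      rw [cochainPrecomp_v, Cochain.zero_v] at hzv
      exact (h p q _).1 hzv
    choose k hk using hv
    refine ⟨Cochain.mk k, ?_⟩
    ext p q hpq
    rw [cochainPrecomp_v, Cochain.mk_v, hk]
  · rintro ⟨y, rfl⟩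
    ext p q hpq
    rw [cochainPrecomp_v, cochainPrecomp_v]
    exact (h p q).apply_apply_eq_zero _

end Precomposition

section MappingCone

variable {𝒜 : Type*} [Category 𝒜] [Preadditive 𝒜] {A B C J : CochainComplex 𝒜 ℤ}
  {f : A ⟶ B} [HomologicalComplex.HasHomotopyCofiber f]

lemma δ_inl_comp_ofHom (u : mappingCone f ⟶ J) :
    δ (-1) 0 ((mappingCone.inl f).comp (Cochain.ofHom u) (add_zero (-1))) =
      cochainPrecomp f J 0 (Cochain.ofHom (mappingCone.inr f ≫ u)) := by
  rw [δ_comp_ofHom, mappingCone.δ_inl, cochainPrecomp_apply, ← Cochain.ofHom_comp,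
    ← Cochain.ofHom_comp, Category.assoc]

lemma exists_inl_comp_sub_δ_eq_zero {l n : ℤ} (hln : l + 1 = n)
    (hf : Function.Surjective (cochainPrecomp f J l)) (U : Cochain (mappingCone f) J n) :
    ∃ γ : Cochain (mappingCone f) J l,
      (mappingCone.inl f).comp (U - δ l n γ) (show -1 + n = l by lia) = 0 := by
  obtain ⟨β, hβ⟩ := hf (n.negOnePow • (mappingCone.inl f).comp U (by lia))
  refine ⟨mappingCone.descCochain f (0 : Cochain A J (l - 1)) β (by lia), ?_⟩
  rw [mappingCone.δ_descCochain _ _ _ _ n hln, ← cochainPrecomp_apply, hβ, Cochain.comp_sub]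
  simp [smul_smul]

-- Apply `δ` to `inl ∘ V = 0`, using that `δ inl` is `f ≫ inr`.
lemma cochainPrecomp_cochainPrecomp_inr_eq_zero {l n m : ℤ} (hln : l + 1 = n) (hnm : n + 1 = m)
    {V : Cochain (mappingCone f) J n}
    (hV : (mappingCone.inl f).comp V (show -1 + n = l by lia) = 0)
    (hδV : (mappingCone.inl f).comp (δ n m V) (show -1 + m = n by lia) = 0) :
    cochainPrecomp f J n (cochainPrecomp (mappingCone.inr f) J n V) = 0 := by
  have h := δ_comp (mappingCone.inl f) V (show -1 + n = l by lia) 0 m n hln (by lia) hnm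
  rw [hV, δ_zero, hδV, mappingCone.δ_inl, zero_add] at h
  rw [← cochainPrecomp_comp, cochainPrecomp_apply]
  exact (smul_eq_zero_iff_eq n.negOnePow).1 (by simpa using h.symm)

variable {φ : mappingCone f ⟶ C}

lemma inl_comp_cochainPrecomp_eq_zero
    (hφ : (mappingCone.inl f).comp (Cochain.ofHom φ) (add_zero (-1)) = 0) {l n : ℤ}
    (z : Cochain C J n) (hln : -1 + n = l) :
    (mappingCone.inl f).comp (cochainPrecomp φ J n z) hln = 0 := by
  rw [cochainPrecomp_apply, ← Cochain.comp_assoc_of_second_is_zero_cochain, hφ,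
    Cochain.zero_comp]

lemma exists_cochainPrecomp_eq
    (hφ : (mappingCone.inl f).comp (Cochain.ofHom φ) (add_zero (-1)) = 0) {l n m : ℤ}
    (hln : l + 1 = n) (hnm : n + 1 = m)
    (hexact : Function.Exact (cochainPrecomp (mappingCone.inr f ≫ φ) J n) (cochainPrecomp f J n))
    {V : Cochain (mappingCone f) J n}
    (hV : (mappingCone.inl f).comp V (show -1 + n = l by lia) = 0)
    (hδV : (mappingCone.inl f).comp (δ n m V) (show -1 + m = n by lia) = 0) :
    ∃ γ : Cochain C J n, cochainPrecomp φ J n γ = V := by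
  obtain ⟨γ, hγ⟩ := (hexact _).1 (cochainPrecomp_cochainPrecomp_inr_eq_zero hln hnm hV hδV)
  refine ⟨γ, (mappingCone.ext_cochain_from_iff f l n hln).2 ⟨?_, ?_⟩⟩
  · rw [hV, inl_comp_cochainPrecomp_eq_zero hφ]
  · rwa [cochainPrecomp_comp] at hγ

lemma exists_eq_δ_add_cochainPrecomp
    (hφ : (mappingCone.inl f).comp (Cochain.ofHom φ) (add_zero (-1)) = 0) {l n m : ℤ}
    (hln : l + 1 = n) (hnm : n + 1 = m)
    (hsurj : Function.Surjective (cochainPrecomp f J l))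
    (hexact : Function.Exact (cochainPrecomp (mappingCone.inr f ≫ φ) J n) (cochainPrecomp f J n))
    (hinj : Function.Injective (cochainPrecomp (mappingCone.inr f ≫ φ) J m))
    {U : Cochain (mappingCone f) J n} {v : Cochain C J m}
    (hU : δ n m U = cochainPrecomp φ J m v) :
    ∃ (γ₁ : Cochain (mappingCone f) J l) (γ₂ : Cochain C J n),
      U = δ l n γ₁ + cochainPrecomp φ J n γ₂ ∧ v = δ n m γ₂ := by
  obtain ⟨γ₁, hγ₁⟩ := exists_inl_comp_sub_δ_eq_zero hln hsurj U
  have hδV : δ n m (U - δ l n γ₁) = cochainPrecomp φ J m v := by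
    rw [δ_sub, δ_δ, sub_zero, hU]
  obtain ⟨γ₂, hγ₂⟩ := exists_cochainPrecomp_eq hφ hln hnm hexact hγ₁
    (by rw [hδV, inl_comp_cochainPrecomp_eq_zero hφ])
  refine ⟨γ₁, γ₂, by rw [hγ₂, add_sub_cancel], hinj ?_⟩
  rw [cochainPrecomp_comp, cochainPrecomp_comp, ← hδV, ← hγ₂, δ_cochainPrecomp]

end MappingCone

theorem homotopic_zero_of_termwise_injective_target_general
    {𝒜 : Type*} [Category 𝒜] [Preadditive 𝒜]
    {A B C J : CochainComplex 𝒜 ℤ} {f : A ⟶ B} {g : B ⟶ C}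
    [HomologicalComplex.HasHomotopyCofiber f]
    {φ : mappingCone f ⟶ C} [HomologicalComplex.HasHomotopyCofiber φ]
    (hφ₁ : mappingCone.inr f ≫ φ = g)
    (hφ₂ : (mappingCone.inl f).comp (Cochain.ofHom φ) (add_zero (-1)) = 0)
    (hinj : ∀ p q, Function.Injective (Preadditive.leftComp (J.X q) (g.f p)))
    (hexact : ∀ p q, Function.Exact (Preadditive.leftComp (J.X q) (g.f p))
      (Preadditive.leftComp (J.X q) (f.f p)))
    (hsurj : ∀ p q, Function.Surjective (Preadditive.leftComp (J.X q) (f.f p)))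
    (u : mappingCone φ ⟶ J) :
    Nonempty (Homotopy u 0) := by
  subst hφ₁
  obtain ⟨γ₁, γ₂, hU, hv⟩ := exists_eq_δ_add_cochainPrecomp hφ₂
    (show (-2 : ℤ) + 1 = -1 by lia) (neg_add_cancel 1)
    (cochainPrecomp_surjective hsurj _) (cochainPrecomp_exact hexact _)
    (cochainPrecomp_injective hinj _) (δ_inl_comp_ofHom u)
  refine ⟨mappingCone.descHomotopy φ u 0 γ₁ γ₂ ?_ ?_⟩
  · simpa [cochainPrecomp_apply] using hU
  · simpa using hv

theorem homotopic_zero_of_termwise_injective_target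
    {𝒜 : Type*} [Category 𝒜] [Abelian 𝒜]
    {A B C : CochainComplex 𝒜 ℤ} (f : A ⟶ B) (g : B ⟶ C)
    (w : ∀ n : ℤ, f.f n ≫ g.f n = 0)
    (hses : ∀ n : ℤ, (ShortComplex.mk (f.f n) (g.f n) (w n)).ShortExact)
    (φ : mappingCone f ⟶ C)
    (hφ₁ : mappingCone.inr f ≫ φ = g)
    (hφ₂ : (mappingCone.inl f).comp (Cochain.ofHom φ) (add_zero (-1)) = 0)
    (J : CochainComplex 𝒜 ℤ) (hJ : ∀ n : ℤ, Injective (J.X n))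
    (u : mappingCone φ ⟶ J) :
    Nonempty (Homotopy u 0) := by
  have hmono (n : ℤ) : Mono (f.f n) := (hses n).mono_f
  have hepi (n : ℤ) : Epi (g.f n) := (hses n).epi_g
  exact homotopic_zero_of_termwise_injective_target_general hφ₁ hφ₂
    (fun p q ↦ leftComp_injective_of_epi (g.f p) (J.X q))
    (fun p q ↦ leftComp_exact_of_exact (hses p).exact (J.X q))
    (fun p q ↦ leftComp_surjective_of_mono (f.f p) (J.X q)) u
end

section
/- Let 𝒜 be an abelian category and let 0 → A → B → C → 0 be a short exact sequence of cochain complexes over 𝒜, given by chain maps f : A → B and g : B → C such that 0 → Aⁿ → Bⁿ → Cⁿ → 0 is exact in 𝒜 for every n. Let φ : Cone(f) → C be the chain map induced by g (well defined since g∘f = 0), so that Cone(φ) is, up to shift, the totalization of the three-term complex of complexes A → B → C. If P is a cochain complex over 𝒜 all of whose components Pⁿ are projective objects of 𝒜, then every chain map P → Cone(φ) is homotopic to zero. -/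
/-!
STATEMENT 8.  Let `𝒜` be an abelian category and let `0 → A → B → C → 0` be a short exact
sequence of cochain complexes over `𝒜` (given by chain maps `f : A ⟶ B`, `g : B ⟶ C` which
are degreewise short exact).  Let `φ : Cone(f) ⟶ C` be the chain map induced by `g`
(characterized by `inr f ≫ φ = g` and the vanishing of its component along `inl f`), so
that `Cone(φ)` is, up to shift, the totalization of the three-term complex of complexes
`A → B → C`.  If `P` is a cochain complex all of whose components are projective objects
of `𝒜`, then every chain map `P ⟶ Cone(φ)` is homotopic to zero.
-/

open CategoryTheory Limits CochainComplex CochainComplex.HomComplex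

/-! Composition with `φ`, from `Hom(P, Cone(f))` to `Hom(P, C)`, is already surjective on the
summand `Hom(P, B)`, and its kernel is acyclic, being the cone of the isomorphism from `Hom(P, A)`
onto the kernel of `Hom(P, B) → Hom(P, C)`. A chain map `P ⟶ Cone(φ)` is a cocycle `x` in
`Hom(P, Cone(f))` together with a cochain `γ` in `Hom(P, C)` such that `δ γ = -(x ≫ φ)`. If `y₀`
lifts `γ`, then `x + δ y₀` is a cocycle of the acyclic kernel, and subtracting a primitive of it
from `y₀` gives a null-homotopy. -/

section

variable {𝒜 : Type*} [Category 𝒜] [Preadditive 𝒜] {P A B C : CochainComplex 𝒜 ℤ}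

/-- The sequence `0 → Aⁿ → Bⁿ → Cⁿ → 0` becomes short exact after applying `Hom(Pᵖ, -)`, for all
`p` and `n`. Under this condition chain maps from `P` to the totalization are null-homotopic; it
holds for termwise projective `P`, and for arbitrary `P` when the sequence is termwise split. -/
structure IsTermwiseHomExact (P : CochainComplex 𝒜 ℤ) (f : A ⟶ B) (g : B ⟶ C) : Prop where
  injective (p n : ℤ) : Function.Injective fun a : P.X p ⟶ A.X n ↦ a ≫ f.f n
  exact (p n : ℤ) : Function.Exact (fun a : P.X p ⟶ A.X n ↦ a ≫ f.f n) fun b ↦ b ≫ g.f n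
  surjective (p n : ℤ) : Function.Surjective fun b : P.X p ⟶ B.X n ↦ b ≫ g.f n

theorem isTermwiseHomExact_of_projective [Balanced 𝒜] {f : A ⟶ B} {g : B ⟶ C}
    (w : ∀ n, f.f n ≫ g.f n = 0)
    (hses : ∀ n, (ShortComplex.mk (f.f n) (g.f n) (w n)).ShortExact)
    (hP : ∀ n, Projective (P.X n)) : IsTermwiseHomExact P f g where
  injective p n := by
    have : Mono (f.f n) := (hses n).mono_f
    exact fun _ _ h ↦ (cancel_mono (f.f n)).mp h
  exact p n b := by
    have : Mono (f.f n) := (hses n).mono_f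
    refine ⟨fun hb ↦ ⟨(hses n).exact.lift b hb, (hses n).exact.lift_f b hb⟩, ?_⟩
    rintro ⟨a, rfl⟩
    simp [w]
  surjective p n c := by
    have : Epi (g.f n) := (hses n).epi_g
    exact ⟨Projective.factorThru c (g.f n), Projective.factorThru_comp c (g.f n)⟩

theorem cochain_comp_ofHom_injective {f : A ⟶ B}
    (hf : ∀ p q, Function.Injective fun a : P.X p ⟶ A.X q ↦ a ≫ f.f q) (n : ℤ) :
    Function.Injective fun a : Cochain P A n ↦ a.comp (Cochain.ofHom f) (add_zero n) := by
  intro a a' h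
  ext p q hpq
  apply hf p q
  simpa using Cochain.congr_v h p q hpq

theorem cochain_comp_ofHom_exact {f : A ⟶ B} {g : B ⟶ C}
    (hfg : ∀ p q, Function.Exact (fun a : P.X p ⟶ A.X q ↦ a ≫ f.f q) fun b ↦ b ≫ g.f q)
    (n : ℤ) :
    Function.Exact (fun a : Cochain P A n ↦ a.comp (Cochain.ofHom f) (add_zero n))
      fun b ↦ b.comp (Cochain.ofHom g) (add_zero n) := by
  refine fun b ↦ ⟨fun hb ↦ ?_, ?_⟩
  · have hb_v (p q : ℤ) (hpq : p + n = q) : b.v p q hpq ≫ g.f q = 0 := by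
      simpa using Cochain.congr_v hb p q hpq
    choose a ha using fun p q hpq ↦ (hfg p q (b.v p q hpq)).mp (hb_v p q hpq)
    refine ⟨Cochain.mk a, ?_⟩
    ext p q hpq
    simpa using ha p q hpq
  · rintro ⟨a, rfl⟩
    ext p q hpq
    simpa using (hfg p q).apply_apply_eq_zero (a.v p q hpq)

theorem cochain_comp_ofHom_surjective {g : B ⟶ C}
    (hg : ∀ p q, Function.Surjective fun b : P.X p ⟶ B.X q ↦ b ≫ g.f q) (n : ℤ) :
    Function.Surjective fun b : Cochain P B n ↦ b.comp (Cochain.ofHom g) (add_zero n) := by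
  intro c
  choose b hb using fun p q (hpq : p + n = q) ↦ hg p q (c.v p q hpq)
  refine ⟨Cochain.mk b, ?_⟩
  ext p q hpq
  simpa using hb p q hpq

variable {f : A ⟶ B} {g : B ⟶ C} [HomologicalComplex.HasHomotopyCofiber f]
  {φ : mappingCone f ⟶ C}

theorem ofHom_eq_snd_comp_ofHom (hφ₁ : mappingCone.inr f ≫ φ = g)
    (hφ₂ : (mappingCone.inl f).comp (Cochain.ofHom φ) (add_zero (-1)) = 0) :
    Cochain.ofHom φ = (mappingCone.snd f).comp (Cochain.ofHom g) (add_zero 0) := by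
  rw [mappingCone.ext_cochain_from_iff f (-1) 0 (neg_add_cancel 1)]
  constructor
  · simp [hφ₂]
  · simp [← hφ₁]

theorem exists_δ_eq_of_comp_ofHom_eq_zero
    (hf : ∀ p q, Function.Injective fun a : P.X p ⟶ A.X q ↦ a ≫ f.f q)
    (hfg : ∀ p q, Function.Exact (fun a : P.X p ⟶ A.X q ↦ a ≫ f.f q) fun b ↦ b ≫ g.f q)
    (hφ₁ : mappingCone.inr f ≫ φ = g)
    (hφ₂ : (mappingCone.inl f).comp (Cochain.ofHom φ) (add_zero (-1)) = 0)
    {n m : ℤ} (hnm : n + 1 = m) (z : Cocycle P (mappingCone f) m)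
    (hz : z.1.comp (Cochain.ofHom φ) (add_zero m) = 0) :
    ∃ y : Cochain P (mappingCone f) n,
      δ n m y = z ∧ y.comp (Cochain.ofHom φ) (add_zero n) = 0 := by
  have hφ := ofHom_eq_snd_comp_ofHom hφ₁ hφ₂
  let β := z.1.comp (mappingCone.snd f) (add_zero m)
  have hβ : β.comp (Cochain.ofHom g) (add_zero m) = 0 := by
    simpa [β, hφ] using hz
  obtain ⟨a, ha : a.comp (Cochain.ofHom f) (add_zero m) = β⟩ :=
    (cochain_comp_ofHom_exact hfg m β).mp hβ
  have hδa : δ m (m + 1) a = -z.1.comp (mappingCone.fst f).1 rfl := by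
    apply cochain_comp_ofHom_injective hf (m + 1)
    dsimp only
    rw [← δ_comp_ofHom, ha, δ_comp_zero_cochain _ _ _ rfl]
    simp
  refine ⟨mappingCone.liftCochain f a 0 hnm, ?_, ?_⟩
  · rw [mappingCone.δ_liftCochain f a 0 hnm (m + 1) rfl, hδa, ha,
      mappingCone.ext_cochain_to_iff f m (m + 1) rfl]
    simp [β]
  · rw [hφ, ← Cochain.comp_assoc_of_second_is_zero_cochain, mappingCone.liftCochain_snd,
      Cochain.zero_comp]

theorem exists_neg_δ_eq_and_comp_ofHom_eq (h : IsTermwiseHomExact P f g)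
    (hφ₁ : mappingCone.inr f ≫ φ = g)
    (hφ₂ : (mappingCone.inl f).comp (Cochain.ofHom φ) (add_zero (-1)) = 0)
    {n m : ℤ} (hnm : n + 1 = m) (x : Cocycle P (mappingCone f) m) (γ : Cochain P C n)
    (hxγ : δ n m γ = -x.1.comp (Cochain.ofHom φ) (add_zero m)) :
    ∃ y : Cochain P (mappingCone f) n,
      -δ n m y = x ∧ y.comp (Cochain.ofHom φ) (add_zero n) = γ := by
  obtain ⟨b, hb : b.comp (Cochain.ofHom g) (add_zero n) = γ⟩ :=
    cochain_comp_ofHom_surjective h.surjective n γ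
  let y₀ := b.comp (Cochain.ofHom (mappingCone.inr f)) (add_zero n)
  have hy₀ : y₀.comp (Cochain.ofHom φ) (add_zero n) = γ := by
    simp [y₀, ← hb, ← hφ₁]
  let z : Cocycle P (mappingCone f) m := x + Cocycle.mk (δ n m y₀) (m + 1) rfl (by simp [δ_δ])
  have hz : z.1.comp (Cochain.ofHom φ) (add_zero m) = 0 := by
    simp [z, ← δ_comp_ofHom, hy₀, hxγ]
  obtain ⟨y₁, hδy₁, hy₁⟩ :=
    exists_δ_eq_of_comp_ofHom_eq_zero h.injective h.exact hφ₁ hφ₂ hnm z hz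
  refine ⟨y₀ - y₁, ?_, ?_⟩
  · simp [hδy₁, z]
  · rw [Cochain.sub_comp, hy₀, hy₁, sub_zero]

theorem homotopic_zero_of_termwise_projective_source_general
    [HomologicalComplex.HasHomotopyCofiber φ] (h : IsTermwiseHomExact P f g)
    (hφ₁ : mappingCone.inr f ≫ φ = g)
    (hφ₂ : (mappingCone.inl f).comp (Cochain.ofHom φ) (add_zero (-1)) = 0)
    (u : P ⟶ mappingCone φ) :
    Nonempty (Homotopy u 0) := by
  let x : Cocycle P (mappingCone f) 1 :=
    Cocycle.mk ((Cochain.ofHom u).comp (mappingCone.fst φ).1 (zero_add 1)) 2 rfl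
      (by simp [δ_zero_cochain_comp _ _ _ (one_add_one_eq_two (R := ℤ))])
  let γ := (Cochain.ofHom u).comp (mappingCone.snd φ) (zero_add 0)
  have hxγ : δ 0 1 γ = -x.1.comp (Cochain.ofHom φ) (add_zero 1) := by
    simp [γ, x, δ_comp_zero_cochain _ _ _ (zero_add 1)]
  obtain ⟨y, hδy, hy⟩ := exists_neg_δ_eq_and_comp_ofHom_eq h hφ₁ hφ₂ (zero_add 1) x γ hxγ
  exact ⟨mappingCone.liftHomotopy φ u 0 y 0 (by simp [hδy, x]) (by simp [hy, γ])⟩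

end

theorem homotopic_zero_of_termwise_projective_source
    {𝒜 : Type*} [Category 𝒜] [Abelian 𝒜]
    {A B C : CochainComplex 𝒜 ℤ} (f : A ⟶ B) (g : B ⟶ C)
    (w : ∀ n : ℤ, f.f n ≫ g.f n = 0)
    (hses : ∀ n : ℤ, (ShortComplex.mk (f.f n) (g.f n) (w n)).ShortExact)
    (φ : mappingCone f ⟶ C)
    (hφ₁ : mappingCone.inr f ≫ φ = g)
    (hφ₂ : (mappingCone.inl f).comp (Cochain.ofHom φ) (add_zero (-1)) = 0)
    (P : CochainComplex 𝒜 ℤ) (hP : ∀ n : ℤ, Projective (P.X n))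
    (u : P ⟶ mappingCone φ) :
    Nonempty (Homotopy u 0) :=
  homotopic_zero_of_termwise_projective_source_general
    (isTermwiseHomExact_of_projective w hses hP) hφ₁ hφ₂ u
end

section
/- Let T be a triangulated category with set-indexed products and let M and N be classes of objects of T closed under products. Then the class M * N, consisting of all objects X for which there exists a distinguished triangle M → X → N → M[1] with M ∈ M and N ∈ N, is closed under products in T. Moreover, if M is closed under shifts in both directions and under finite direct sums, then for every n ≥ 1 the class ⟨M⟩ₙ of all direct summands of objects of the n-fold star product M * M * ⋯ * M is closed under products in T. -/
/-!
STATEMENT 14.  Let `T` be a triangulated category with set-indexed products and let `M`, `N`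
be classes of objects of `T` closed under products.  Then the class `M * N` (objects `X`
fitting into a distinguished triangle `M → X → N → M⟦1⟧` with `M ∈ M`, `N ∈ N`) is closed
under products.  Moreover, if `M` is closed under shifts in both directions and under finite
direct sums, then for every `n ≥ 1` the class `⟨M⟩ₙ` of direct summands of objects of the
`n`-fold star product `M * ⋯ * M` is closed under products.

Below `starPow M k` denotes the `(k+1)`-fold star product `M^{*(k+1)}`, so that quantifying
over all `k : ℕ` corresponds to quantifying over all `n = k + 1 ≥ 1`.
-/

open CategoryTheory Limits Pretriangulated

universe w v u

variable {C : Type u} [Category.{v} C] [HasZeroObject C] [HasShift C ℤ] [Preadditive C]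
  [∀ n : ℤ, (shiftFunctor C n).Additive] [Pretriangulated C]

/-- The star product `M * N` of two classes of objects of a pretriangulated category:
the class of objects `X` for which there is a distinguished triangle `m ⟶ X ⟶ n ⟶ m⟦1⟧`
with `m ∈ M` and `n ∈ N`. -/
def starProduct (M N : C → Prop) : C → Prop := fun X =>
  ∃ (m n : C), M m ∧ N n ∧ ∃ (f : m ⟶ X) (g : X ⟶ n) (h : n ⟶ m⟦(1 : ℤ)⟧),
    Triangle.mk f g h ∈ distTriang C

/-- `starPow M k` is the `(k+1)`-fold star product `M * M * ⋯ * M`. -/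
def starPow (M : C → Prop) : ℕ → (C → Prop)
  | 0 => M
  | k + 1 => starProduct M (starPow M k)

/-- The class of direct summands (retracts) of objects belonging to `P`. -/
def summandClosure (P : C → Prop) : C → Prop := fun X =>
  ∃ (W : C), P W ∧ ∃ (i : X ⟶ W) (r : W ⟶ X), i ≫ r = 𝟙 X

/-- A class of objects is closed under products indexed by `J`. Only the chosen products `∏ᶜ A`
are tested, so the class need not be closed under isomorphisms. -/
def ClosedUnderPi {D : Type*} [Category* D] (J : Type*) [HasProductsOfShape J D]
    (P : D → Prop) : Prop :=
  ∀ A : J → D, (∀ j, P (A j)) → P (∏ᶜ A)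

namespace ClosedUnderPi

protected theorem summandClosure {D : Type*} [Category* D] {J : Type*} [HasProductsOfShape J D]
    {P : D → Prop} (hP : ClosedUnderPi J P) : ClosedUnderPi J (summandClosure P) := by
  intro A hA
  choose W hW i r hir using hA
  have retract : Limits.Pi.map i ≫ Limits.Pi.map r = 𝟙 (∏ᶜ A) := by
    simp only [Limits.Pi.map_comp_map, hir, Limits.Pi.map_id]
  exact ⟨∏ᶜ W, hP W hW, Limits.Pi.map i, Limits.Pi.map r, retract⟩

variable {J : Type*} [HasProductsOfShape J C] {M N : C → Prop}

protected theorem starProduct (hM : ClosedUnderPi J M) (hN : ClosedUnderPi J N) :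
    ClosedUnderPi J (starProduct M N) := by
  intro A hA
  choose m n hm hn f g h hT using hA
  exact ⟨∏ᶜ m, ∏ᶜ n, hM m hm, hN n hn, _, _, _,
    productTriangle_distinguished (fun j => Triangle.mk (f j) (g j) (h j)) hT⟩

protected theorem starPow (hM : ClosedUnderPi J M) : ∀ k, ClosedUnderPi J (starPow M k)
  | 0 => hM
  | k + 1 => hM.starProduct (hM.starPow k)

end ClosedUnderPi

theorem starProduct_closed_under_products_general {J : Type*} [HasProductsOfShape J C]
    {M N : C → Prop} (hM : ClosedUnderPi J M) (hN : ClosedUnderPi J N) :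
    ClosedUnderPi J (starProduct M N) ∧
      ∀ n : ℕ, ClosedUnderPi J (summandClosure (starPow M n)) :=
  ⟨hM.starProduct hN, fun n => (hM.starPow n).summandClosure⟩

theorem starProduct_closed_under_products
    [HasProducts.{w} C] [HasFiniteBiproducts C]
    (M N : C → Prop)
    (hM : ∀ (I : Type w) (A : I → C), (∀ i, M (A i)) → M (∏ᶜ A))
    (hN : ∀ (I : Type w) (A : I → C), (∀ i, N (A i)) → N (∏ᶜ A)) :
    (∀ (I : Type w) (A : I → C),
      (∀ i, starProduct M N (A i)) → starProduct M N (∏ᶜ A)) ∧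
    ((∀ (X : C) (n : ℤ), M X → M (X⟦n⟧)) →
      (∀ (k : ℕ) (y : Fin k → C), (∀ i, M (y i)) → M (biproduct y)) →
      ∀ (n : ℕ) (I : Type w) (A : I → C),
        (∀ i, summandClosure (starPow M n) (A i)) →
          summandClosure (starPow M n) (∏ᶜ A)) :=
  ⟨fun I => (starProduct_closed_under_products_general (hM I) (hN I)).1,
    fun _ _ n I => (starProduct_closed_under_products_general (hM I) (hN I)).2 n⟩
end

section
/- Let 𝒜 be an additive category with set-indexed coproducts and let j : S → T and k : T → R be composable morphisms such that k is a cokernel of j. If S and R are compact objects of 𝒜, then T is a compact object of 𝒜. In particular (the case R = 0), if there is an epimorphism from a compact object S onto an object T, then T is compact. -/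
/-!
STATEMENT 15.  Let `𝒜` be an additive category with set-indexed coproducts and let
`j : S ⟶ T` and `k : T ⟶ R` be composable morphisms such that `k` is a cokernel of `j`.
If `S` and `R` are compact, then `T` is compact.  In particular (the case `R = 0`), if
there is an epimorphism from a compact object `S` onto an object `T`, then `T` is compact.

Compactness of `s`: for every family `(Aᵢ)` the canonical map
`⊕ᵢ Hom(s, Aᵢ) → Hom(s, ∐ᵢ Aᵢ)` is bijective.
-/

open CategoryTheory Limits

universe w v u

/-- The canonical map `⊕ᵢ Hom(s, Aᵢ) →+ Hom(s, ∐ᵢ Aᵢ)`. -/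
noncomputable def coproductComparison {C : Type u} [Category.{v} C] [Preadditive C]
    (s : C) {I : Type w} (A : I → C) [HasCoproduct A] :
    (DirectSum I (fun i => s ⟶ A i)) →+ (s ⟶ ∐ A) :=
  letI := Classical.decEq I
  DirectSum.toAddMonoid (fun i =>
    AddMonoidHom.mk' (fun f => f ≫ Sigma.ι A i) (fun f g => by
      simp [Preadditive.add_comp]))

/-- An object `s` of a preadditive category is compact if, for every set-indexed family of
objects `(Aᵢ)` admitting a coproduct, the canonical map `⊕ᵢ Hom(s, Aᵢ) → Hom(s, ∐ᵢ Aᵢ)` is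
bijective. -/
def IsCompactObj.{w', v', u'} {C : Type u'} [Category.{v'} C] [Preadditive C] (s : C) : Prop :=
  ∀ {I : Type w'} (A : I → C) [HasCoproduct A], Function.Bijective (coproductComparison s A)

/-!
Write `e_F` for the sum over a finite set `F` of indices of the idempotents of `∐ A` that project
onto a single summand. A morphism `f` to `∐ A` lies in the image of the comparison map exactly when
`f ≫ e_F = f` for some `F`. Given `f : T ⟶ ∐ A`, compactness of `S` yields such an `F` for `j ≫ f`,
so `f - f ≫ e_F` is killed by `j` and factors through `R`, whose compactness puts the factor, hence
`f - f ≫ e_F`, in the image. The remaining part `f ≫ e_F` is in the image for every `F`.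
-/

section

variable {C : Type u} [Category.{v} C] [Preadditive C]

section Comparison

variable {I : Type w} (A : I → C) [HasCoproduct A]

/-- The endomorphism of `∐ A` which is the identity on the summands indexed by `F` and zero on the
others; it detects which morphisms to `∐ A` come from `⊕ᵢ Hom(s, Aᵢ)`. -/
noncomputable def coproductTruncation [DecidableEq I] (F : Finset I) : ∐ A ⟶ ∐ A :=
  ∑ i ∈ F, Sigma.π A i ≫ Sigma.ι A i

lemma comp_coproductTruncation [DecidableEq I] {s : C} (f : s ⟶ ∐ A) (F : Finset I) :
    f ≫ coproductTruncation A F = ∑ i ∈ F, (f ≫ Sigma.π A i) ≫ Sigma.ι A i := by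
  simp only [coproductTruncation, Preadditive.comp_sum, Category.assoc]

lemma coproductComparison_of [dec : DecidableEq I] {s : C} (i : I) (f : s ⟶ A i) :
    coproductComparison s A (DirectSum.of (fun i => s ⟶ A i) i f) = f ≫ Sigma.ι A i := by
  rw [coproductComparison, Subsingleton.elim (Classical.decEq I) dec, DirectSum.toAddMonoid_of,
    AddMonoidHom.mk'_apply]

lemma coproductComparison_comp_π [DecidableEq I] {s : C}
    (x : DirectSum I (fun i => s ⟶ A i)) (i : I) :
    coproductComparison s A x ≫ Sigma.π A i = x i := by
  induction x using DirectSum.induction_on with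
  | zero => simp
  | of k f =>
    rw [coproductComparison_of, Category.assoc]
    obtain rfl | hki := eq_or_ne k i
    · rw [Sigma.ι_π_eq_id, Category.comp_id, DirectSum.of_eq_same]
    · rw [Sigma.ι_π_of_ne A hki, comp_zero, DirectSum.of_eq_of_ne _ _ _ hki.symm]
  | add x y hx hy => rw [map_add, Preadditive.add_comp, hx, hy, DirectSum.add_apply]

lemma coproductComparison_injective (s : C) :
    Function.Injective (coproductComparison s A) := by
  classical
  intro x y hxy
  refine DFinsupp.ext fun i => ?_
  rw [← coproductComparison_comp_π A x, hxy, coproductComparison_comp_π]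

lemma coproductComparison_comp_coproductTruncation_support [DecidableEq I] {s : C}
    [∀ i (f : s ⟶ A i), Decidable (f ≠ 0)] (x : DirectSum I (fun i => s ⟶ A i)) :
    coproductComparison s A x ≫ coproductTruncation A x.support = coproductComparison s A x :=
  calc
    _ = ∑ i ∈ x.support, x i ≫ Sigma.ι A i := by
      simp only [comp_coproductTruncation, coproductComparison_comp_π]
    _ = coproductComparison s A (∑ i ∈ x.support, DirectSum.of (fun i => s ⟶ A i) i (x i)) := by
      simp only [map_sum, coproductComparison_of]
    _ = coproductComparison s A x := by rw [DirectSum.sum_support_of]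

variable {A}

lemma comp_coproductTruncation_mem_range [DecidableEq I] {s : C} (f : s ⟶ ∐ A)
    (F : Finset I) : f ≫ coproductTruncation A F ∈ (coproductComparison s A).range := by
  rw [comp_coproductTruncation]
  exact sum_mem fun i _ => ⟨_, coproductComparison_of A i _⟩

lemma mem_range_coproductComparison_iff [DecidableEq I] {s : C} {f : s ⟶ ∐ A} :
    f ∈ (coproductComparison s A).range ↔ ∃ F : Finset I, f ≫ coproductTruncation A F = f := by
  classical
  constructor
  · rintro ⟨x, rfl⟩
    exact ⟨x.support, coproductComparison_comp_coproductTruncation_support A x⟩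
  · rintro ⟨F, hF⟩
    exact hF ▸ comp_coproductTruncation_mem_range f F

lemma comp_mem_range_coproductComparison {s t : C} (k : s ⟶ t) {f : t ⟶ ∐ A}
    (hf : f ∈ (coproductComparison t A).range) :
    k ≫ f ∈ (coproductComparison s A).range := by
  classical
  obtain ⟨F, hF⟩ := mem_range_coproductComparison_iff.1 hf
  exact mem_range_coproductComparison_iff.2 ⟨F, by rw [Category.assoc, hF]⟩

end Comparison

lemma isCompactObj_iff_forall_mem_range {s : C} :
    IsCompactObj.{w} s ↔ ∀ {I : Type w} (A : I → C) [HasCoproduct A] (f : s ⟶ ∐ A),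
      f ∈ (coproductComparison s A).range :=
  ⟨fun hs _ A _ => (hs A).surjective, fun hs _ A _ => ⟨coproductComparison_injective A s, hs A⟩⟩

theorem isCompactObj_of_cokernel_general {S T R : C} (j : S ⟶ T) (k : T ⟶ R)
    (factors : ∀ {X : C} (g : T ⟶ X), j ≫ g = 0 → ∃ h : R ⟶ X, k ≫ h = g)
    (hS : IsCompactObj.{w} S) (hR : IsCompactObj.{w} R) : IsCompactObj.{w} T := by
  classical
  rw [isCompactObj_iff_forall_mem_range] at hS hR ⊢
  intro I A _ f
  obtain ⟨F, hF⟩ := mem_range_coproductComparison_iff.1 (hS A (j ≫ f))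
  have comp_sub_eq_zero : j ≫ (f - f ≫ coproductTruncation A F) = 0 := by
    rw [Preadditive.comp_sub, ← Category.assoc, hF, sub_self]
  obtain ⟨h, hh⟩ := factors _ comp_sub_eq_zero
  have sub_mem_range : f - f ≫ coproductTruncation A F ∈ (coproductComparison T A).range :=
    hh ▸ comp_mem_range_coproductComparison k (hR A h)
  rw [← sub_add_cancel f (f ≫ coproductTruncation A F)]
  exact add_mem sub_mem_range (comp_coproductTruncation_mem_range f F)

lemma IsCompactObj.of_epi {S T : C} (e : S ⟶ T) [Epi e] (hS : IsCompactObj.{w} S) :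
    IsCompactObj.{w} T :=
  -- As `C` may lack a zero object, the zero morphism `T ⟶ S` serves as a weak cokernel of `e`.
  isCompactObj_of_cokernel_general e (0 : T ⟶ S)
    (fun g hg => ⟨0, by rw [comp_zero, zero_of_epi_comp e hg]⟩) hS hS

end

theorem isCompactObj_of_cokernel
    {C : Type u} [Category.{v} C] [Preadditive C] [HasFiniteBiproducts C]
    [HasCoproducts.{w} C] :
    (∀ {S T R : C} (j : S ⟶ T) (k : T ⟶ R) (hw : j ≫ k = 0),
      Nonempty (IsColimit (CokernelCofork.ofπ k hw)) →
      IsCompactObj.{w, v, u} S → IsCompactObj.{w, v, u} R → IsCompactObj.{w, v, u} T) ∧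
    (∀ {S T : C} (e : S ⟶ T), Epi e →
      IsCompactObj.{w, v, u} S → IsCompactObj.{w, v, u} T) := by
  refine ⟨fun j k _ ⟨hk⟩ => ?_, fun e _ => IsCompactObj.of_epi e⟩
  exact isCompactObj_of_cokernel_general j k fun g hg =>
    ⟨_, (CokernelCofork.IsColimit.desc' hk g hg).2⟩
end

section
/- Let 𝒜 be an abelian category and suppose given a morphism of short exact sequences from 0 → W' → A' → Z' → 0 to 0 → W → A → Z → 0, i.e., morphisms W' → W, A' → A and Z' → Z making both squares commute. If the morphism W' → W is an epimorphism, then the induced morphism A' → A ×_Z Z' to the pullback of A → Z ← Z' is an epimorphism. -/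
/-!
STATEMENT 18.  Let `𝒜` be an abelian category and suppose given a morphism of short exact
sequences from `0 → W' → A' → Z' → 0` to `0 → W → A → Z → 0`.  If the morphism `W' → W` is
an epimorphism, then the induced morphism `A' → A ×_Z Z'` to the pullback of `A → Z ← Z'`
is an epimorphism.
-/

open CategoryTheory Limits

/-!
A morphism of sequences factors through the base change `W ⟶ A ×_Z Z' ⟶ Z'` of the target along
`Z' ⟶ Z`. The base change is still exact in the middle, and the first factor is `W' ⟶ W` on the
left and the identity on the right, so the four lemma shows that it is epi in the middle.
-/

section BaseChange

universe v u

variable {C : Type u} [Category.{v} C]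

section HasZeroMorphisms

variable [HasZeroMorphisms C]

/-- The base change `S.X₁ ⟶ S.X₂ ×_{S.X₃} Z' ⟶ Z'` of a short complex `S` along a morphism
`γ : Z' ⟶ S.X₃`; its first map has components `S.f` and `0`. -/
noncomputable def shortComplexBaseChange (S : ShortComplex C) {Z' : C} (γ : Z' ⟶ S.X₃)
    [HasPullback S.g γ] : ShortComplex C where
  X₁ := S.X₁
  X₂ := pullback S.g γ
  X₃ := Z'
  f := pullback.lift S.f 0 (by rw [S.zero, zero_comp])
  g := pullback.snd S.g γ
  zero := pullback.lift_snd _ _ _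

/-- The morphism to the base change along `φ.τ₃` through which a morphism `φ` of short complexes
factors; it is the identity on the third objects. -/
noncomputable def toShortComplexBaseChange {S' S : ShortComplex C} (φ : S' ⟶ S)
    [HasPullback S.g φ.τ₃] : S' ⟶ shortComplexBaseChange S φ.τ₃ where
  τ₁ := φ.τ₁
  τ₂ := pullback.lift φ.τ₂ S'.g φ.comm₂₃
  τ₃ := 𝟙 S'.X₃
  comm₁₂ := by
    change φ.τ₁ ≫ pullback.lift S.f 0 _ = S'.f ≫ pullback.lift φ.τ₂ S'.g _
    ext
    · simp only [Category.assoc, pullback.lift_fst, φ.comm₁₂]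
    · simp only [Category.assoc, pullback.lift_snd, comp_zero, S'.zero]
  comm₂₃ := by
    change pullback.lift φ.τ₂ S'.g _ ≫ pullback.snd S.g φ.τ₃ = S'.g ≫ 𝟙 S'.X₃
    rw [pullback.lift_snd, Category.comp_id]

end HasZeroMorphisms

variable [Abelian C] {S' S : ShortComplex C}

theorem exact_shortComplexBaseChange (hS : S.Exact) {Z' : C} (γ : Z' ⟶ S.X₃) :
    (shortComplexBaseChange S γ).Exact := by
  rw [ShortComplex.exact_iff_exact_up_to_refinements]
  intro T (x : T ⟶ pullback S.g γ) (hx : x ≫ pullback.snd S.g γ = 0)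
  have fst_comp_g_eq_zero : (x ≫ pullback.fst S.g γ) ≫ S.g = 0 := by
    rw [Category.assoc, pullback.condition, reassoc_of% hx, zero_comp]
  obtain ⟨T', π, hπ, y, hy⟩ := hS.exact_up_to_refinements _ fst_comp_g_eq_zero
  refine ⟨T', π, hπ, y, ?_⟩
  change π ≫ x = y ≫ pullback.lift S.f 0 _
  ext
  · simpa only [Category.assoc, pullback.lift_fst] using hy
  · simp only [Category.assoc, pullback.lift_snd, hx, comp_zero]

theorem epi_to_pullback_of_epi_general (φ : S' ⟶ S) (hS : S.Exact) (hg : Epi S'.g)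
    (hτ₁ : Epi φ.τ₁) :
    Epi (pullback.lift φ.τ₂ S'.g φ.comm₂₃ : S'.X₂ ⟶ pullback S.g φ.τ₃) := by
  let ψ : S' ⟶ shortComplexBaseChange S φ.τ₃ := toShortComplexBaseChange φ
  have : Epi ψ.τ₁ := hτ₁
  have : Epi ψ.τ₃ := inferInstanceAs (Epi (𝟙 S'.X₃))
  have : Epi (shortComplexBaseChange S φ.τ₃).g := epi_of_epi_fac ψ.comm₂₃
  exact ShortComplex.epi_τ₂_of_exact_of_epi ψ (exact_shortComplexBaseChange hS φ.τ₃)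

end BaseChange

theorem epi_to_pullback_of_epi
    {𝒜 : Type*} [Category 𝒜] [Abelian 𝒜]
    {W' A' Z' W A Z : 𝒜}
    (i' : W' ⟶ A') (p' : A' ⟶ Z') (w' : i' ≫ p' = 0)
    (h' : (ShortComplex.mk i' p' w').ShortExact)
    (i : W ⟶ A) (p : A ⟶ Z) (w : i ≫ p = 0)
    (h : (ShortComplex.mk i p w).ShortExact)
    (α : W' ⟶ W) (β : A' ⟶ A) (γ : Z' ⟶ Z)
    (sq₁ : i' ≫ β = α ≫ i) (sq₂ : p' ≫ γ = β ≫ p)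
    (hα : Epi α) :
    Epi (pullback.lift β p' sq₂.symm : A' ⟶ pullback p γ) :=
  epi_to_pullback_of_epi_general (S' := .mk i' p' w') (S := .mk i p w)
    ⟨α, β, γ, sq₁.symm, sq₂.symm⟩ h.exact h'.epi_g hα
end
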